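/- arXiv:2105.06848 — 2 statements merged into one kernel-verified Lean document; each statement's English description precedes it below -/
import Mathlib

section
/- Fix 1/2 < σ_L < σ_R < 1, a nonnegative integer m, and an open rectangle R ⊂ {σ_L < Re(s) < σ_R}. For any f holomorphic on R, any compact subset K ⊂ R, and any ε > 0, there exist unimodular numbers (c(p))_p, one for each prime p, such that the series ∑_p Li_{m+1}(p^{-s} c(p)) / (log p)^m converges locally uniformly on R and sup_{s ∈ K} |∑_p Li_{m+1}(p^{-s} c(p))/(log p)^m − f(s)| < ε. -/
open Complex Filter

/-- The polylogarithm `Li_{m+1}(z) = ∑_{k=1}^∞ z^k / k^{m+1}` for `|z| < 1`. -/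
noncomputable def polylog (m : ℕ) (z : ℂ) : ℂ :=
  ∑' k : ℕ, z ^ (k + 1) / ((k : ℂ) + 1) ^ (m + 1)

namespace PD

open ArithmeticFunction in
lemma summable_nonprime {x : ℝ} (hx : 1 / 2 < x) :
    Summable fun n : ℕ ↦ (if n.Prime then 0 else vonMangoldt n) * (n : ℝ) ^ (-x) := by
  set F₀ : ℕ → ℝ := fun n ↦ (if n.Prime then 0 else vonMangoldt n) * (n : ℝ) ^ (-x) with hF₀d
  set F' : Nat.Primes × ℕ → ℝ := fun pk ↦ F₀ ((pk.1 : ℕ) ^ (pk.2 + 1)) with hF'd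
  set F'' : Nat.Primes × ℕ → ℝ := fun pk ↦ F₀ ((pk.1 : ℕ) ^ (pk.2 + 2)) with hF''d
  have hF₀ (p : Nat.Primes) : F₀ p.val = 0 := by simp [hF₀d, p.prop]
  refine (summable_subtype_iff_indicator (s := {n | IsPrimePow n}).mp ?_).congr
      fun n ↦ Set.indicator_apply_eq_self.mpr fun (hn : ¬ IsPrimePow n) ↦ ?_
  swap
  · simp [hF₀d, vonMangoldt_eq_zero_iff.mpr hn]
  have hFF' :
      F₀ ∘ Subtype.val (p := fun n ↦ n ∈ {n | IsPrimePow n}) =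
        F' ∘ ⇑Nat.Primes.prodNatEquiv.symm := by
    refine (Equiv.eq_comp_symm Nat.Primes.prodNatEquiv (F₀ ∘ Subtype.val) F').mpr ?_
    ext1 n
    simp only [Function.comp_apply, hF'd]
    congr
  rw [hFF']
  refine (Nat.Primes.prodNatEquiv.symm.summable_iff (f := F')).mpr ?_
  have hF'₀ (p : Nat.Primes) : F' (p, 0) = 0 := by simp only [zero_add, pow_one, hF₀, hF'd]
  have hF'₁ : F'' = F' ∘ (Prod.map _root_.id (· + 1)) := by
    ext1
    simp only [Function.comp_apply, Prod.map_fst, id_eq, Prod.map_snd, hF''d, hF'd]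
  have hs : Summable F'' := by
    set δ : ℝ := (2 * x - 1) / 2 with hδ
    have hδ0 : 0 < δ := by rw [hδ]; linarith
    have h1 : Summable fun p : Nat.Primes ↦ (p : ℝ) ^ (δ - 2 * x) / δ :=
      (Nat.Primes.summable_rpow.mpr (by rw [hδ]; linarith)).div_const _
    have h2 : Summable fun k : ℕ ↦ ((2 : ℝ) ^ (-x)) ^ k :=
      summable_geometric_of_lt_one (by positivity)
        (Real.rpow_lt_one_of_one_lt_of_neg (by norm_num) (by linarith))
    refine Summable.of_nonneg_of_le ?_ ?_ (h1.mul_of_nonneg h2 (fun p ↦ by positivity)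
      (fun k ↦ by positivity))
    · intro pk
      simp only [hF''d, hF₀d]
      refine mul_nonneg ?_ (by positivity)
      split_ifs
      exacts [le_rfl, vonMangoldt_nonneg]
    · rintro ⟨p, k⟩
      have hp := p.prop
      have hp0 : (0 : ℝ) < (p : ℕ) := by exact_mod_cast hp.pos
      have hp2 : (2 : ℝ) ≤ (p : ℕ) := by exact_mod_cast hp.two_le
      have hnp : ¬ ((p : ℕ) ^ (k + 2)).Prime := Nat.Prime.not_prime_pow (by omega)
      simp only [hF''d, hF₀d, hnp, if_false]
      rw [vonMangoldt_apply_pow (by omega), vonMangoldt_apply_prime hp]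
      have e1 : (((p : ℕ) ^ (k + 2) : ℕ) : ℝ) ^ (-x)
          = (p : ℝ) ^ (-(2 * x)) * ((p : ℝ) ^ (-x)) ^ k := by
        push_cast
        rw [← Real.rpow_natCast, ← Real.rpow_natCast, ← Real.rpow_mul hp0.le,
          ← Real.rpow_mul hp0.le, ← Real.rpow_add hp0]
        congr 1; push_cast; ring
      rw [e1]
      have e2 : Real.log p ≤ (p : ℝ) ^ δ / δ := Real.log_le_rpow_div hp0.le hδ0
      have e3 : (p : ℝ) ^ (-x) ≤ (2 : ℝ) ^ (-x) :=
        Real.rpow_le_rpow_of_nonpos (by norm_num) hp2 (by linarith)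
      have e4 : (p : ℝ) ^ (δ - 2 * x) / δ = (p : ℝ) ^ δ / δ * (p : ℝ) ^ (-(2 * x)) := by
        rw [sub_eq_add_neg, Real.rpow_add hp0]; ring
      rw [e4, ← mul_assoc]
      have : 0 ≤ Real.log p := Real.log_nonneg (by linarith)
      gcongr
  refine (Function.Injective.summable_iff ?_ fun u hu ↦ ?_).mp <| hF'₁ ▸ hs
  · exact Function.Injective.prodMap (fun ⦃a₁ a₂⦄ a ↦ a) <| add_left_injective 1
  · simp only [Set.range_prodMap, Set.range_id, Set.mem_prod, Set.mem_univ, Set.mem_range,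
      Nat.exists_add_one_eq, true_and, not_lt, nonpos_iff_eq_zero] at hu
    rw [← hF'₀ u.1, ← hu]

/-- `(s-1)ζ(s)`, entire. -/
noncomputable def Zf : ℂ → ℂ := Function.update (fun s ↦ (s - 1) * riemannZeta s) 1 1

lemma Zf_diff : Differentiable ℂ Zf := by
  have hne : ∀ s : ℂ, s ≠ 1 → DifferentiableAt ℂ Zf s := by
    intro s hs
    have h1 : DifferentiableAt ℂ (fun s ↦ (s - 1) * riemannZeta s) s :=
      (by fun_prop : DifferentiableAt ℂ (fun s : ℂ ↦ s - 1) s).mul (differentiableAt_riemannZeta hs)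
    refine h1.congr_of_eventuallyEq ?_
    filter_upwards [isOpen_ne.mem_nhds hs] with z hz
    simp [Zf, Function.update_of_ne hz]
  intro s
  rcases eq_or_ne s 1 with rfl | hs
  · refine (Complex.analyticAt_of_differentiable_on_punctured_nhds_of_continuousAt ?_ ?_).differentiableAt
    · filter_upwards [self_mem_nhdsWithin] with z hz using hne z hz
    · rw [Zf, continuousAt_update_same]
      exact riemannZeta_residue_one
  · exact hne s hs

lemma Zf_ne {s : ℂ} (hs : 1 ≤ s.re) : Zf s ≠ 0 := by
  rcases eq_or_ne s 1 with rfl | h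
  · simp [Zf]
  · simp only [Zf, Function.update_of_ne h]
    exact mul_ne_zero (sub_ne_zero.mpr h) (riemannZeta_ne_zero_of_one_le_re hs)

/-- the regular part of the negative logarithmic derivative of zeta -/
noncomputable def psi (s : ℂ) : ℂ := -deriv Zf s / Zf s

lemma psi_diff {s : ℂ} (hs : Zf s ≠ 0) : DifferentiableAt ℂ psi s := by
  have : DifferentiableAt ℂ (deriv Zf) s :=
    (Zf_diff.analyticAt s).deriv.differentiableAt
  exact this.neg.div (Zf_diff s) hs

lemma psi_eq {s : ℂ} (hs : 1 < s.re) :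
    -deriv riemannZeta s / riemannZeta s = psi s + 1 / (s - 1) := by
  have h1 : s ≠ 1 := by rintro rfl; simp at hs
  have hz := riemannZeta_ne_zero_of_one_le_re hs.le
  have h1' := sub_ne_zero.mpr h1
  have hd : deriv Zf s = riemannZeta s + (s - 1) * deriv riemannZeta s := by
    have : Zf =ᶠ[nhds s] fun s ↦ (s - 1) * riemannZeta s := by
      filter_upwards [isOpen_ne.mem_nhds h1] with z hz
      simp [Zf, Function.update_of_ne hz]
    rw [this.deriv_eq]
    have := ((hasDerivAt_id s).sub_const 1).mul (differentiableAt_riemannZeta h1).hasDerivAt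
    have h2 := this.deriv
    simp only [id, one_mul] at h2
    exact h2
  rw [psi, hd]
  simp only [Zf, Function.update_of_ne h1]
  field_simp
  ring

lemma zero_free (B : ℝ) : ∃ δ > 0, ∀ s : ℂ, 1 - δ < s.re → |s.im| ≤ B → Zf s ≠ 0 := by
  set S : Set ℂ := (Set.Icc 0 1 ×ℂ Set.Icc (-B) B) ∩ {s | Zf s = 0} with hS
  have hSc : IsCompact S :=
    (isCompact_Icc.reProdIm isCompact_Icc).inter_right
      (isClosed_eq Zf_diff.continuous continuous_const)
  rcases S.eq_empty_or_nonempty with he | hne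
  · refine ⟨1, one_pos, fun s h1 h2 h3 ↦ ?_⟩
    rcases le_or_gt 1 s.re with h | h
    · exact Zf_ne h h3
    · have : s ∈ S := ⟨⟨⟨by linarith, h.le⟩, abs_le.mp h2⟩, h3⟩
      simp [he] at this
  · obtain ⟨s0, hs0, hmax⟩ := hSc.exists_isMaxOn hne Complex.continuous_re.continuousOn
    have h0 : s0.re < 1 := by
      by_contra h
      exact Zf_ne (not_lt.mp h) hs0.2
    refine ⟨1 - s0.re, by linarith, fun s h1 h2 h3 ↦ ?_⟩
    rcases le_or_gt 1 s.re with h | h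
    · exact Zf_ne h h3
    · have h00 : 0 ≤ s0.re := hs0.1.1.1
      have : s ∈ S := ⟨⟨⟨by linarith, h.le⟩, abs_le.mp h2⟩, h3⟩
      have := hmax this
      simp only [Set.mem_ofPred_eq] at this
      linarith

end PD

open Complex Filter
namespace PD

/-- boundary integral over a rectangle -/
noncomputable def rectInt (f : ℂ → ℂ) (l h t u : ℝ) : ℂ :=
  (∫ x in l..h, f (x + t * I)) - (∫ x in l..h, f (x + u * I)) +
    I * (∫ y in t..u, f (h + y * I)) - I * (∫ y in t..u, f (l + y * I))

/-- closed rectangle -/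
def Rc (l h t u : ℝ) : Set ℂ := {z | l ≤ z.re ∧ z.re ≤ h ∧ t ≤ z.im ∧ z.im ≤ u}
/-- open rectangle -/
def Ro (l h t u : ℝ) : Set ℂ := {z | l < z.re ∧ z.re < h ∧ t < z.im ∧ z.im < u}

lemma Rc_compact (l h t u : ℝ) : IsCompact (Rc l h t u) := by
  have : Rc l h t u = Set.Icc l h ×ℂ Set.Icc t u := by
    ext z; simp [Rc, Complex.mem_reProdIm, and_assoc]
  rw [this]; exact isCompact_Icc.reProdIm isCompact_Icc

lemma Ro_open (l h t u : ℝ) : IsOpen (Ro l h t u) := by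
  have : Ro l h t u = Set.Ioo l h ×ℂ Set.Ioo t u := by
    ext z; simp [Ro, Complex.mem_reProdIm, and_assoc]
  rw [this]; exact isOpen_Ioo.reProdIm isOpen_Ioo

lemma rectInt_zero {f : ℂ → ℂ} {l h t u : ℝ} (hlh : l ≤ h) (htu : t ≤ u)
    (hf : DifferentiableOn ℂ f (Rc l h t u)) : rectInt f l h t u = 0 := by
  have := Complex.integral_boundary_rect_eq_zero_of_differentiableOn f (l + t * I) (h + u * I)
    (hf.mono ?_)
  · simpa [rectInt] using this
  · intro z hz
    simp [Complex.mem_reProdIm, Set.uIcc_of_le hlh, Set.uIcc_of_le htu] at hz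
    exact ⟨hz.1.1, hz.1.2, hz.2.1, hz.2.2⟩

lemma log_quarter {w : ℂ} (h1 : 0 < w.re) (h2 : 0 < w.im) :
    Complex.log w - Complex.log (-I * w) = (Real.pi / 2 : ℝ) * I := by
  have hw : w ≠ 0 := by rintro rfl; simp at h1
  have ha : w.arg ∈ Set.Ioo 0 (Real.pi/2) := by
    constructor
    · have h0 := Complex.arg_nonneg_iff.mpr h2.le
      refine lt_of_le_of_ne h0 fun h ↦ ?_
      have := (Complex.arg_eq_zero_iff.mp h.symm).2
      linarith
    · exact Complex.arg_lt_pi_div_two_iff.mpr (Or.inl h1)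
  have hI : (-I : ℂ) ≠ 0 := by simp
  rw [Complex.log_mul hI hw, Complex.log_neg_I]
  · push_cast; ring
  · rw [Complex.arg_neg_I]
    constructor <;> [have := ha.1; have := ha.2] <;> linarith [Real.pi_pos]

/-- FTC for `1/(z - s)` along a segment with direction `d`, rotated by `c` into the right half plane -/
lemma seg_log {c p d : ℂ} {a b : ℝ} (hab : a ≤ b) (hc : c ≠ 0)
    (h : ∀ x ∈ Set.Icc a b, 0 < (c * (p + x * d)).re) :
    ∫ x in a..b, d * (p + (x : ℂ) * d)⁻¹ =
      Complex.log (c * (p + b * d)) - Complex.log (c * (p + a * d)) := by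
  refine intervalIntegral.integral_eq_sub_of_hasDerivAt (f := fun x : ℝ ↦ Complex.log (c * (p + x * d)))
    (fun x hx ↦ ?_) ?_
  · rw [Set.uIcc_of_le hab] at hx
    have hx' := h x hx
    have hne : c * (p + x * d) ≠ 0 := by intro h0; rw [h0] at hx'; simp at hx'
    have hd : HasDerivAt (fun x : ℝ ↦ c * (p + (x : ℂ) * d)) (c * d) x := by
      have h1 : HasDerivAt (fun x : ℝ ↦ (x : ℂ)) 1 x := Complex.ofRealCLM.hasDerivAt
      simpa using ((h1.mul_const d).const_add p).const_mul c
    have := hd.clog_real (Or.inl hx')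
    rw [mul_div_mul_left _ _ hc, div_eq_mul_inv] at this
    exact this
  · refine ContinuousOn.intervalIntegrable ?_
    rw [Set.uIcc_of_le hab]
    refine continuousOn_const.mul (ContinuousOn.inv₀ (by fun_prop) fun x hx h0 ↦ ?_)
    have := h x hx
    simp [h0] at this

lemma rectInt_kernel {l h t u : ℝ} {s : ℂ} (hs : s ∈ Ro l h t u) :
    rectInt (fun z ↦ (z - s)⁻¹) l h t u = 2 * Real.pi * I := by
  obtain ⟨h1, h2, h3, h4⟩ := hs
  have hlh : l ≤ h := by linarith
  have htu : t ≤ u := by linarith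
  have hI : I ≠ 0 := I_ne_zero
  have b := seg_log (c := I) (p := t * I - s) (d := 1) hlh I_ne_zero
    (fun x hx ↦ by simp; linarith)
  have tp := seg_log (c := -I) (p := u * I - s) (d := 1) hlh (by simp)
    (fun x hx ↦ by simp; linarith)
  have rt := seg_log (c := 1) (p := h - s) (d := I) htu (by simp)
    (fun x hx ↦ by simp; linarith)
  have lf := seg_log (c := -1) (p := l - s) (d := I) htu (by simp)
    (fun x hx ↦ by simp; linarith)
  have e1 := log_quarter (w := (h + u * I - s)) (by simp; linarith) (by simp; linarith)
  have e2 := log_quarter (w := -I * (l + u * I - s)) (by simp; linarith) (by simp; linarith)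
  have e3 := log_quarter (w := -(l + t * I - s)) (by simp; linarith) (by simp; linarith)
  have e4 := log_quarter (w := I * (h + t * I - s)) (by simp; linarith) (by simp; linarith)
  simp only [mul_one, one_mul, intervalIntegral.integral_const_mul] at b tp rt lf
  have c2 : -I * (-I * (l + u * I - s)) = -1 * (l - s + u * I) := by
    linear_combination (l + u * I - s) * I_mul_I
  have c3 : -I * (-(l + t * I - s)) = I * (t * I - s + l) := by ring
  have c4 : -I * (I * (h + t * I - s)) = (h - s + t * I) := by
    linear_combination -(h + t * I - s) * I_mul_I
  rw [c2] at e2; rw [c3] at e3; rw [c4] at e4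
  have hb : (∫ x in l..h, ((x : ℂ) + t * I - s)⁻¹) = ∫ x in l..h, (t * I - s + (x : ℂ))⁻¹ := by
    congr 1; ext x; congr 1; ring
  have htp : (∫ x in l..h, ((x : ℂ) + u * I - s)⁻¹) = ∫ x in l..h, (u * I - s + (x : ℂ))⁻¹ := by
    congr 1; ext x; congr 1; ring
  have hrt : (∫ x in t..u, (h + (x : ℂ) * I - s)⁻¹) = ∫ x in t..u, (h - s + (x : ℂ) * I)⁻¹ := by
    congr 1; ext x; congr 1; ring
  have hlf : (∫ x in t..u, (l + (x : ℂ) * I - s)⁻¹) = ∫ x in t..u, (l - s + (x : ℂ) * I)⁻¹ := by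
    congr 1; ext x; congr 1; ring
  rw [rectInt, hb, htp, hrt, hlf, b, tp, rt, lf]
  have r1 : (u * I - s + h) = (h + u * I - s) := by ring
  have r2 : (h - s + u * I) = (h + u * I - s) := by ring
  have r3 : (u * I - s + l) = (l + u * I - s) := by ring
  have r4 : (t * I - s + h) = (h + t * I - s) := by ring
  have r5 : -(l + t * I - s) = -1 * (l - s + t * I) := by ring
  rw [r1, r2, r3, r4]
  rw [r5] at e3
  push_cast at e1 e2 e3 e4
  linear_combination e1 + e2 + e3 + e4

/-- boundary -/
def Bd (l h t u : ℝ) : Set ℂ := Rc l h t u \ Ro l h t u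

lemma mem_bd_bot {l h t u x : ℝ} (htu : t ≤ u) (hx : x ∈ Set.Icc l h) :
    ((x : ℂ) + t * I) ∈ Bd l h t u := by
  refine ⟨⟨?_, ?_, ?_, ?_⟩, fun h ↦ ?_⟩
  · simpa using hx.1
  · simpa using hx.2
  · simp
  · simpa using htu
  · have := h.2.2.1; simp at this

lemma mem_bd_top {l h t u x : ℝ} (htu : t ≤ u) (hx : x ∈ Set.Icc l h) :
    ((x : ℂ) + u * I) ∈ Bd l h t u := by
  refine ⟨⟨?_, ?_, ?_, ?_⟩, fun h ↦ ?_⟩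
  · simpa using hx.1
  · simpa using hx.2
  · simpa using htu
  · simp
  · have := h.2.2.2; simp at this

lemma mem_bd_left {l h t u x : ℝ} (hlh : l ≤ h) (hx : x ∈ Set.Icc t u) :
    ((l : ℂ) + x * I) ∈ Bd l h t u := by
  refine ⟨⟨?_, ?_, ?_, ?_⟩, fun h ↦ ?_⟩
  · simp
  · simpa using hlh
  · simpa using hx.1
  · simpa using hx.2
  · have := h.1; simp at this

lemma mem_bd_right {l h t u x : ℝ} (hlh : l ≤ h) (hx : x ∈ Set.Icc t u) :
    ((h : ℂ) + x * I) ∈ Bd l h t u := by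
  refine ⟨⟨?_, ?_, ?_, ?_⟩, fun h ↦ ?_⟩
  · simpa using hlh
  · simp
  · simpa using hx.1
  · simpa using hx.2
  · have := h.2.1; simp at this

lemma rectInt_congr {f g : ℂ → ℂ} {l h t u : ℝ} (hlh : l ≤ h) (htu : t ≤ u)
    (hfg : ∀ z ∈ Bd l h t u, f z = g z) : rectInt f l h t u = rectInt g l h t u := by
  unfold rectInt
  congr 1
  · congr 1
    · congr 1
      · refine intervalIntegral.integral_congr fun x hx ↦ hfg _ (mem_bd_bot htu ?_)
        rwa [Set.uIcc_of_le hlh] at hx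
      · refine intervalIntegral.integral_congr fun x hx ↦ hfg _ (mem_bd_top htu ?_)
        rwa [Set.uIcc_of_le hlh] at hx
    · congr 1
      refine intervalIntegral.integral_congr fun x hx ↦ hfg _ (mem_bd_right hlh ?_)
      rwa [Set.uIcc_of_le htu] at hx
  · congr 1
    refine intervalIntegral.integral_congr fun x hx ↦ hfg _ (mem_bd_left hlh ?_)
    rwa [Set.uIcc_of_le htu] at hx

lemma ii_bot {f : ℂ → ℂ} {l h t u : ℝ} (hlh : l ≤ h) (htu : t ≤ u)
    (hf : ContinuousOn f (Bd l h t u)) :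
    ContinuousOn (fun x : ℝ ↦ f (x + t * I)) (Set.uIcc l h) := by
  refine hf.comp (by fun_prop) fun x hx ↦ mem_bd_bot htu ?_
  rwa [Set.uIcc_of_le hlh] at hx

lemma ii_top {f : ℂ → ℂ} {l h t u : ℝ} (hlh : l ≤ h) (htu : t ≤ u)
    (hf : ContinuousOn f (Bd l h t u)) :
    ContinuousOn (fun x : ℝ ↦ f (x + u * I)) (Set.uIcc l h) := by
  refine hf.comp (by fun_prop) fun x hx ↦ mem_bd_top htu ?_
  rwa [Set.uIcc_of_le hlh] at hx

lemma ii_left {f : ℂ → ℂ} {l h t u : ℝ} (hlh : l ≤ h) (htu : t ≤ u)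
    (hf : ContinuousOn f (Bd l h t u)) :
    ContinuousOn (fun x : ℝ ↦ f (l + x * I)) (Set.uIcc t u) := by
  refine hf.comp (by fun_prop) fun x hx ↦ mem_bd_left hlh ?_
  rwa [Set.uIcc_of_le htu] at hx

lemma ii_right {f : ℂ → ℂ} {l h t u : ℝ} (hlh : l ≤ h) (htu : t ≤ u)
    (hf : ContinuousOn f (Bd l h t u)) :
    ContinuousOn (fun x : ℝ ↦ f (h + x * I)) (Set.uIcc t u) := by
  refine hf.comp (by fun_prop) fun x hx ↦ mem_bd_right hlh ?_
  rwa [Set.uIcc_of_le htu] at hx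

lemma rectInt_add {f g : ℂ → ℂ} {l h t u : ℝ} (hlh : l ≤ h) (htu : t ≤ u)
    (hf : ContinuousOn f (Bd l h t u)) (hg : ContinuousOn g (Bd l h t u)) :
    rectInt (fun z ↦ f z + g z) l h t u = rectInt f l h t u + rectInt g l h t u := by
  unfold rectInt
  rw [intervalIntegral.integral_add (ii_bot hlh htu hf).intervalIntegrable
      (ii_bot hlh htu hg).intervalIntegrable,
    intervalIntegral.integral_add (ii_top hlh htu hf).intervalIntegrable
      (ii_top hlh htu hg).intervalIntegrable,
    intervalIntegral.integral_add (ii_left hlh htu hf).intervalIntegrable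
      (ii_left hlh htu hg).intervalIntegrable,
    intervalIntegral.integral_add (ii_right hlh htu hf).intervalIntegrable
      (ii_right hlh htu hg).intervalIntegrable]
  ring

lemma rectInt_const_mul (c : ℂ) (f : ℂ → ℂ) (l h t u : ℝ) :
    rectInt (fun z ↦ c * f z) l h t u = c * rectInt f l h t u := by
  unfold rectInt
  simp only [intervalIntegral.integral_const_mul]
  ring

lemma rectInt_split {f : ℂ → ℂ} {l c h t u : ℝ} (hlc : l ≤ c) (hch : c ≤ h) (htu : t ≤ u)
    (hf : ContinuousOn f (Bd l h t u)) :
    rectInt f l h t u = rectInt f l c t u + rectInt f c h t u := by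
  have hb := ii_bot (hlc.trans hch) htu hf
  have ht := ii_top (hlc.trans hch) htu hf
  rw [Set.uIcc_of_le (hlc.trans hch)] at hb ht
  have s1 : Set.uIcc l c ⊆ Set.Icc l h := by
    rw [Set.uIcc_of_le hlc]; exact Set.Icc_subset_Icc_right hch
  have s2 : Set.uIcc c h ⊆ Set.Icc l h := by
    rw [Set.uIcc_of_le hch]; exact Set.Icc_subset_Icc_left hlc
  unfold rectInt
  rw [← intervalIntegral.integral_add_adjacent_intervals (hb.mono s1).intervalIntegrable
      (hb.mono s2).intervalIntegrable,
    ← intervalIntegral.integral_add_adjacent_intervals (ht.mono s1).intervalIntegrable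
      (ht.mono s2).intervalIntegrable]
  ring

lemma cauchy_rect {f : ℂ → ℂ} {U : Set ℂ} (hU : IsOpen U) (hf : DifferentiableOn ℂ f U)
    {l h t u : ℝ} (hsub : Rc l h t u ⊆ U) {s : ℂ} (hs : s ∈ Ro l h t u) :
    rectInt (fun z ↦ f z * (z - s)⁻¹) l h t u = 2 * Real.pi * I * f s := by
  have hlh : l ≤ h := by linarith [hs.1, hs.2.1]
  have htu : t ≤ u := by linarith [hs.2.2.1, hs.2.2.2]
  have hsc : s ∈ Rc l h t u := ⟨hs.1.le, hs.2.1.le, hs.2.2.1.le, hs.2.2.2.le⟩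
  have hd : DifferentiableOn ℂ (dslope f s) U :=
    (Complex.differentiableOn_dslope (hU.mem_nhds (hsub hsc))).mpr hf
  have hne : ∀ z ∈ Bd l h t u, z - s ≠ 0 := by
    intro z hz h0
    rw [sub_eq_zero.mp h0] at hz
    exact hz.2 hs
  have h1 : rectInt (fun z ↦ f z * (z - s)⁻¹) l h t u
      = rectInt (fun z ↦ dslope f s z + f s * (z - s)⁻¹) l h t u := by
    refine rectInt_congr hlh htu fun z hz ↦ ?_
    have h0 := hne z hz
    rw [dslope_of_ne _ (sub_ne_zero.mp h0), slope_def_field]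
    field_simp
    ring
  rw [h1, rectInt_add hlh htu, rectInt_const_mul, rectInt_kernel hs,
    rectInt_zero hlh htu (hd.mono hsub)]
  · ring
  · exact (hd.mono hsub).continuousOn.mono Set.sdiff_subset
  · exact continuousOn_const.mul (ContinuousOn.inv₀ (by fun_prop) hne)

end PD

open Complex Filter
namespace PD

open Classical in
/-- bundle a function continuous on `Q` -/
noncomputable def mkC (Q : Set ℂ) (f : ℂ → ℂ) : C(Q, ℂ) :=
  if h : ContinuousOn f Q then ⟨Q.domRestrict f, continuousOn_iff_continuous_domRestrict.mp h⟩ else 0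

lemma mkC_apply {Q : Set ℂ} {f : ℂ → ℂ} (h : ContinuousOn f Q) (x : Q) : mkC Q f x = f x := by
  rw [mkC, dif_pos h]; rfl

lemma mkC_congr {Q : Set ℂ} {f g : ℂ → ℂ} (hf : ContinuousOn f Q)
    (h : ∀ x ∈ Q, f x = g x) : mkC Q f = mkC Q g := by
  have hg : ContinuousOn g Q := hf.congr fun x hx ↦ (h x hx).symm
  ext x
  rw [mkC_apply hf, mkC_apply hg, h x x.2]

lemma mkC_contOn {X : Type*} [TopologicalSpace X] {Q : Set ℂ} {V : Set X} {F : X → ℂ → ℂ}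
    (h : ContinuousOn (fun q : X × ℂ ↦ F q.1 q.2) (V ×ˢ Q)) :
    ContinuousOn (fun z ↦ mkC Q (F z)) V := by
  have hz : ∀ z ∈ V, ContinuousOn (F z) Q := fun z hz ↦
    h.comp (f := fun s : ℂ ↦ (z, s)) (by fun_prop) (fun s hs ↦ ⟨hz, hs⟩)
  rw [continuousOn_iff_continuous_domRestrict]
  refine ContinuousMap.continuous_of_continuous_uncurry _ ?_
  have : (Function.uncurry fun (x : V) (y : Q) ↦ (V.domRestrict (fun z ↦ mkC Q (F z)) x) y)
      = fun q : V × Q ↦ F q.1 q.2 := by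
    ext ⟨x, y⟩
    exact mkC_apply (hz x x.2) y
  rw [this]
  exact h.comp_continuous (f := fun q : V × Q ↦ ((q.1 : X), (q.2 : ℂ))) (by fun_prop)
    (fun q ↦ ⟨q.1.2, q.2.2⟩)

lemma diffOn_of_eval {K : Type*} [TopologicalSpace K] [CompactSpace K] {H : ℂ → C(K, ℂ)} {V : Set ℂ}
    (hV : IsOpen V) (hc : ContinuousOn H V) (he : ∀ k, DifferentiableOn ℂ (fun z ↦ H z k) V) :
    DifferentiableOn ℂ H V := by
  intro z0 hz0
  obtain ⟨r, hr, hball⟩ := Metric.nhds_basis_closedBall.mem_iff.mp (hV.mem_nhds hz0)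
  lift r to NNReal using hr.le
  have hr' : 0 < r := by exact_mod_cast hr
  have hci : CircleIntegrable H z0 r :=
    (hc.mono (Metric.sphere_subset_closedBall.trans hball)).circleIntegrable r.2
  have hps := hasFPowerSeriesOn_cauchy_integral hci hr'
  have hd := hps.differentiableOn.differentiableAt
    (Metric.eball_mem_nhds z0 (by exact_mod_cast hr'))
  refine (hd.congr_of_eventuallyEq ?_).differentiableWithinAt
  filter_upwards [Metric.ball_mem_nhds z0 hr] with w hw
  ext k
  have h1 := (he k).mono hball |>.circleIntegral_sub_inv_smul hw
  have hsm : CircleIntegrable (fun z ↦ (z - w)⁻¹ • H z) z0 r := by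
    refine ContinuousOn.circleIntegrable r.2 ?_
    have hi : ContinuousOn (fun z : ℂ ↦ (z - w)⁻¹) (Metric.sphere z0 r) := by
      refine ContinuousOn.inv₀ (by fun_prop) ?_
      intro z hz h0
      rw [sub_eq_zero.mp h0] at hz
      exact (Metric.mem_ball.mp hw).ne (Metric.mem_sphere.mp hz)
    exact hi.smul (hc.mono (Metric.sphere_subset_closedBall.trans hball))
  have h2 : (∮ z in C(z0, r), (z - w)⁻¹ • H z) k = ∮ z in C(z0, r), (z - w)⁻¹ • H z k := by
    have := (ContinuousMap.evalCLM ℂ k).intervalIntegral_comp_comm hsm.out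
    simp only [circleIntegral]
    simpa using this.symm
  rw [ContinuousMap.smul_apply, h2, h1]
  have : (2 * Real.pi * I : ℂ) ≠ 0 := by simp [Real.pi_ne_zero]
  simp only [smul_eq_mul]
  field_simp

/-- Main holomorphy lemma. -/
lemma functional_diff {Q V : Set ℂ} (hQ : IsCompact Q) (hV : IsOpen V) {F : ℂ → ℂ → ℂ}
    (h : ContinuousOn (fun q : ℂ × ℂ ↦ F q.1 q.2) (V ×ˢ Q))
    (hd : ∀ s ∈ Q, DifferentiableOn ℂ (fun z ↦ F z s) V) (Φ : C(Q, ℂ) →L[ℂ] ℂ) :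
    DifferentiableOn ℂ (fun z ↦ Φ (mkC Q (F z))) V := by
  have := isCompact_iff_compactSpace.mp hQ
  have hz : ∀ z ∈ V, ContinuousOn (F z) Q := fun z hz ↦
    h.comp (f := fun s : ℂ ↦ (z, s)) (by fun_prop) (fun s hs ↦ ⟨hz, hs⟩)
  have : DifferentiableOn ℂ (fun z ↦ mkC Q (F z)) V := by
    refine diffOn_of_eval hV (mkC_contOn h) fun k ↦ ?_
    refine (hd k k.2).congr fun z hzV ↦ mkC_apply (hz z hzV) k
  exact Φ.differentiable.comp_differentiableOn this

/-- commuting a functional with an integral -/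
lemma functional_integral {Q : Set ℂ} (hQ : IsCompact Q) {a b : ℝ} {F : ℝ → ℂ → ℂ}
    (h : ContinuousOn (fun q : ℝ × ℂ ↦ F q.1 q.2) (Set.uIcc a b ×ˢ Q)) (Φ : C(Q, ℂ) →L[ℂ] ℂ) :
    ContinuousOn (fun s ↦ ∫ x in a..b, F x s) Q ∧
    Φ (mkC Q (fun s ↦ ∫ x in a..b, F x s)) = ∫ x in a..b, Φ (mkC Q (F x)) := by
  have := isCompact_iff_compactSpace.mp hQ
  have hz : ∀ z ∈ Set.uIcc a b, ContinuousOn (F z) Q := fun z hz ↦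
    h.comp (f := fun s : ℂ ↦ (z, s)) (by fun_prop) (fun s hs ↦ ⟨hz, hs⟩)
  have hc := mkC_contOn h
  have hi : IntervalIntegrable (fun x ↦ mkC Q (F x)) MeasureTheory.volume a b :=
    hc.intervalIntegrable
  have key : ∀ k : Q, (∫ x in a..b, mkC Q (F x)) k = ∫ x in a..b, F x k := by
    intro k
    have := (ContinuousMap.evalCLM ℂ k).intervalIntegral_comp_comm hi
    simp only [ContinuousMap.evalCLM_apply] at this
    rw [← this]
    exact intervalIntegral.integral_congr fun x hx ↦ mkC_apply (hz x hx) k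
  have hcont : ContinuousOn (fun s ↦ ∫ x in a..b, F x s) Q := by
    rw [continuousOn_iff_continuous_domRestrict]
    exact (∫ x in a..b, mkC Q (F x)).continuous.congr key
  refine ⟨hcont, ?_⟩
  rw [Φ.intervalIntegral_comp_comm hi]
  congr 1
  ext k
  rw [mkC_apply hcont, key]

lemma mkC_add {Q : Set ℂ} {f g : ℂ → ℂ} (hf : ContinuousOn f Q) (hg : ContinuousOn g Q) :
    mkC Q (fun s ↦ f s + g s) = mkC Q f + mkC Q g := by
  ext x
  rw [mkC_apply (f := fun s ↦ f s + g s) (hf.add hg), ContinuousMap.add_apply, mkC_apply hf, mkC_apply hg]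

lemma mkC_const_mul {Q : Set ℂ} {f : ℂ → ℂ} (c : ℂ) (hf : ContinuousOn f Q) :
    mkC Q (fun s ↦ c * f s) = c • mkC Q f := by
  ext x
  rw [mkC_apply (f := fun s ↦ c * f s) (continuousOn_const.mul hf), ContinuousMap.smul_apply, mkC_apply hf, smul_eq_mul]

/-- Cauchy transform of a functional -/
noncomputable def ct {Q : Set ℂ} (Φ : C(Q, ℂ) →L[ℂ] ℂ) (z : ℂ) : ℂ :=
  Φ (mkC Q (fun s ↦ (z - s)⁻¹))

lemma ct_diff {Q : Set ℂ} (hQ : IsCompact Q) (Φ : C(Q, ℂ) →L[ℂ] ℂ) :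
    DifferentiableOn ℂ (ct Φ) Qᶜ := by
  refine functional_diff hQ hQ.isClosed.isOpen_compl (F := fun z s ↦ (z - s)⁻¹) ?_ ?_ Φ
  · refine ContinuousOn.inv₀ (by fun_prop) ?_
    rintro ⟨z, s⟩ ⟨h1, h2⟩ h0
    rw [sub_eq_zero.mp h0] at h1
    exact h1 h2
  · intro s hs
    refine DifferentiableOn.inv (by fun_prop) fun z hz h0 ↦ ?_
    rw [sub_eq_zero.mp h0] at hz
    exact hz hs

lemma ct_rep {Q U : Set ℂ} (hQ : IsCompact Q) (Φ : C(Q, ℂ) →L[ℂ] ℂ) (hU : IsOpen U) {f : ℂ → ℂ}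
    (hf : DifferentiableOn ℂ f U) {l h t u : ℝ} (hlh : l ≤ h) (htu : t ≤ u)
    (hsub : Rc l h t u ⊆ U) (hQs : Q ⊆ Ro l h t u) :
    rectInt (fun z ↦ f z * ct Φ z) l h t u = 2 * Real.pi * I * Φ (mkC Q f) := by
  have hRU : Ro l h t u ⊆ U := fun z hz ↦ hsub ⟨hz.1.le, hz.2.1.le, hz.2.2.1.le, hz.2.2.2.le⟩
  have hfQ : ContinuousOn f Q := hf.continuousOn.mono (hQs.trans hRU)
  have hbd : ∀ z ∈ Bd l h t u, z ∉ Q := fun z hz hq ↦ hz.2 (hQs hq)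
  have hfB : ContinuousOn f (Bd l h t u) :=
    hf.continuousOn.mono (Set.sdiff_subset.trans hsub)
  -- one side
  have side : ∀ (a b : ℝ) (γ : ℝ → ℂ), Continuous γ → (∀ x ∈ Set.uIcc a b, γ x ∈ Bd l h t u) →
      ContinuousOn (fun s ↦ ∫ x in a..b, f (γ x) * (γ x - s)⁻¹) Q ∧
      Φ (mkC Q (fun s ↦ ∫ x in a..b, f (γ x) * (γ x - s)⁻¹)) =
        ∫ x in a..b, f (γ x) * ct Φ (γ x) := by
    intro a b γ hγ hm
    have hF : ContinuousOn (fun q : ℝ × ℂ ↦ f (γ q.1) * (γ q.1 - q.2)⁻¹) (Set.uIcc a b ×ˢ Q) := by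
      refine ContinuousOn.mul ?_ (ContinuousOn.inv₀ (by fun_prop) ?_)
      · exact hfB.comp (f := fun q : ℝ × ℂ ↦ γ q.1) (by fun_prop) fun q hq ↦ hm _ hq.1
      · rintro ⟨x, s⟩ ⟨h1, h2⟩ h0
        have := hbd _ (hm x h1)
        rw [sub_eq_zero.mp h0] at this
        exact this h2
    obtain ⟨h1, h2⟩ := functional_integral hQ (F := fun x s ↦ f (γ x) * (γ x - s)⁻¹) hF Φ
    refine ⟨h1, h2.trans ?_⟩
    refine intervalIntegral.integral_congr fun x hx ↦ ?_
    have hx' := hbd _ (hm x hx)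
    have : ContinuousOn (fun s ↦ (γ x - s)⁻¹) Q := by
      refine ContinuousOn.inv₀ (by fun_prop) fun s hs h0 ↦ ?_
      rw [sub_eq_zero.mp h0] at hx'
      exact hx' hs
    simp only [ct]
    rw [mkC_const_mul _ this]
    simp
  obtain ⟨b1, b2⟩ := side l h (fun x ↦ x + t * I) (by fun_prop)
    (fun x hx ↦ mem_bd_bot htu (by rwa [Set.uIcc_of_le hlh] at hx))
  obtain ⟨t1, t2⟩ := side l h (fun x ↦ x + u * I) (by fun_prop)
    (fun x hx ↦ mem_bd_top htu (by rwa [Set.uIcc_of_le hlh] at hx))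
  obtain ⟨l1, l2⟩ := side t u (fun x ↦ l + x * I) (by fun_prop)
    (fun x hx ↦ mem_bd_left hlh (by rwa [Set.uIcc_of_le htu] at hx))
  obtain ⟨r1, r2⟩ := side t u (fun x ↦ h + x * I) (by fun_prop)
    (fun x hx ↦ mem_bd_right hlh (by rwa [Set.uIcc_of_le htu] at hx))
  have e := mkC_const_mul (2 * Real.pi * I) hfQ
  have e2 : mkC Q (fun s ↦ 2 * Real.pi * I * f s) =
      mkC Q (fun s ↦ ∫ x in l..h, f (x + t * I) * (x + t * I - s)⁻¹)
      - mkC Q (fun s ↦ ∫ x in l..h, f (x + u * I) * (x + u * I - s)⁻¹)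
      + I • mkC Q (fun s ↦ ∫ x in t..u, f (h + x * I) * (h + x * I - s)⁻¹)
      - I • mkC Q (fun s ↦ ∫ x in t..u, f (l + x * I) * (l + x * I - s)⁻¹) := by
    ext s
    have := cauchy_rect hU hf hsub (hQs s.2)
    simp only [ContinuousMap.sub_apply, ContinuousMap.add_apply, ContinuousMap.smul_apply]
    rw [mkC_apply b1, mkC_apply t1, mkC_apply l1, mkC_apply r1,
      mkC_apply (f := fun s ↦ 2 * Real.pi * I * f s) (continuousOn_const.mul hfQ), ← this, rectInt]
    simp only [smul_eq_mul]
  have e3 := congrArg Φ (e.symm.trans e2)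
  simp only [map_sub, map_add, map_smul, smul_eq_mul] at e3
  rw [e3, b2, t2, l2, r2, rectInt]

end PD

open Complex Filter
namespace PD

noncomputable def ev {Q : Set ℂ} (Φ : C(Q, ℂ) →L[ℂ] ℂ) (n : ℕ) : ℂ :=
  Φ (mkC Q (fun s ↦ (n : ℂ) ^ (-s)))

noncomputable def bc {Q : Set ℂ} (Φ : C(Q, ℂ) →L[ℂ] ℂ) (n : ℕ) : ℂ :=
  (ArithmeticFunction.vonMangoldt n : ℂ) * ev Φ n

lemma cpow_cont {n : ℕ} (hn : n ≠ 0) : Continuous fun s : ℂ ↦ (n : ℂ) ^ (-s) :=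
  Continuous.const_cpow continuous_neg (Or.inl (by exact_mod_cast hn))

lemma mkC_norm_le {Q : Set ℂ} [CompactSpace Q] {f : ℂ → ℂ} (hf : ContinuousOn f Q) {C : ℝ} (hC : 0 ≤ C)
    (h : ∀ s ∈ Q, ‖f s‖ ≤ C) : ‖mkC Q f‖ ≤ C := by
  rw [ContinuousMap.norm_le _ hC]
  intro x
  rw [mkC_apply hf]; exact h x x.2

lemma ev_norm {Q : Set ℂ} [CompactSpace Q] {l : ℝ} (hl : ∀ s ∈ Q, l ≤ s.re)
    (Φ : C(Q, ℂ) →L[ℂ] ℂ) {n : ℕ} (hn : n ≠ 0) : ‖ev Φ n‖ ≤ ‖Φ‖ * (n : ℝ) ^ (-l) := by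
  refine (Φ.le_opNorm _).trans ?_
  gcongr
  refine mkC_norm_le (cpow_cont hn).continuousOn (by positivity) fun s hs ↦ ?_
  rw [norm_natCast_cpow_of_pos (Nat.pos_of_ne_zero hn)]
  refine Real.rpow_le_rpow_of_exponent_le (by exact_mod_cast Nat.one_le_iff_ne_zero.mpr hn) ?_
  simpa using hl s hs

lemma b_summable {Q : Set ℂ} [CompactSpace Q] {l : ℝ} (hl12 : 1 / 2 < l) (hl : ∀ s ∈ Q, l ≤ s.re)
    (Φ : C(Q, ℂ) →L[ℂ] ℂ) (m : ℕ)
    (hsum : Summable fun p : ℕ ↦ if p.Prime then ‖ev Φ p‖ / (Real.log p) ^ m else 0)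
    {w : ℂ} (hw : 0 < w.re) : LSeriesSummable (bc Φ) w := by
  set δ : ℝ := w.re / (m + 1) with hδ
  have hδ0 : 0 < δ := by positivity
  refine Summable.of_norm_bounded (g := fun n : ℕ ↦
    ((1 / δ) ^ (m + 1)) * (if n.Prime then ‖ev Φ n‖ / (Real.log n) ^ m else 0) +
    ‖Φ‖ * ((if n.Prime then 0 else ArithmeticFunction.vonMangoldt n) * (n : ℝ) ^ (-l)))
    ((hsum.mul_left _).add ((summable_nonprime hl12).mul_left _)) fun n ↦ ?_
  rw [LSeries.norm_term_eq]
  have hΛ := ArithmeticFunction.vonMangoldt_nonneg (n := n)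
  rcases eq_or_ne n 0 with rfl | hn
  · simp [Nat.not_prime_zero]
  rw [if_neg hn]
  have hn1 : (1 : ℝ) ≤ n := by exact_mod_cast Nat.one_le_iff_ne_zero.mpr hn
  have hnb : ‖bc Φ n‖ = ArithmeticFunction.vonMangoldt n * ‖ev Φ n‖ := by
    rw [bc, norm_mul, norm_real, Real.norm_of_nonneg hΛ]
  rw [hnb]
  by_cases hp : n.Prime
  · simp only [hp, if_true, zero_mul, mul_zero, add_zero]
    rw [ArithmeticFunction.vonMangoldt_apply_prime hp]
    have hlog : 0 < Real.log n := Real.log_pos (by exact_mod_cast hp.one_lt)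
    have h1 : Real.log n ≤ (n : ℝ) ^ δ / δ := Real.log_le_rpow_div (by positivity) hδ0
    have h2 : Real.log n ^ (m + 1) ≤ (1 / δ) ^ (m + 1) * (n : ℝ) ^ w.re := by
      calc Real.log n ^ (m + 1) ≤ ((n : ℝ) ^ δ / δ) ^ (m + 1) := by gcongr
        _ = (1 / δ) ^ (m + 1) * ((n : ℝ) ^ δ) ^ (m + 1) := by rw [← mul_pow]; ring_nf
        _ = _ := by
          rw [← Real.rpow_natCast ((n : ℝ) ^ δ), ← Real.rpow_mul (by positivity)]
          congr 2
          rw [hδ]; push_cast; field_simp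
    rw [div_le_iff₀ (by positivity)]
    calc Real.log n * ‖ev Φ n‖ = Real.log n ^ (m + 1) * (‖ev Φ n‖ / Real.log n ^ m) := by
          rw [pow_succ]; field_simp
      _ ≤ ((1 / δ) ^ (m + 1) * (n : ℝ) ^ w.re) * (‖ev Φ n‖ / Real.log n ^ m) := by gcongr
      _ = _ := by ring
  · simp only [hp, if_false, mul_zero, zero_add]
    calc ArithmeticFunction.vonMangoldt n * ‖ev Φ n‖ / (n : ℝ) ^ w.re
        ≤ ArithmeticFunction.vonMangoldt n * ‖ev Φ n‖ :=
          div_le_self (by positivity) (Real.one_le_rpow hn1 hw.le)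
      _ ≤ ArithmeticFunction.vonMangoldt n * (‖Φ‖ * (n : ℝ) ^ (-l)) := by
          gcongr; exact ev_norm hl Φ hn
      _ = _ := by ring

lemma b_diff {Q : Set ℂ} [CompactSpace Q] {l : ℝ} (hl12 : 1 / 2 < l) (hl : ∀ s ∈ Q, l ≤ s.re)
    (Φ : C(Q, ℂ) →L[ℂ] ℂ) (m : ℕ)
    (hsum : Summable fun p : ℕ ↦ if p.Prime then ‖ev Φ p‖ / (Real.log p) ^ m else 0) :
    DifferentiableOn ℂ (LSeries (bc Φ)) {w | 0 < w.re} := by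
  refine (LSeries_differentiableOn (bc Φ)).mono fun w hw ↦ ?_
  have : LSeries.abscissaOfAbsConv (bc Φ) ≤ (0 : ℝ) :=
    LSeries.abscissaOfAbsConv_le_of_forall_lt_LSeriesSummable fun y hy ↦
      b_summable hl12 hl Φ m hsum (by simpa using hy)
  exact this.trans_lt (by exact_mod_cast (show (0:ℝ) < w.re from hw))

lemma b_eq {Q : Set ℂ} [CompactSpace Q] {l : ℝ} (hl : ∀ s ∈ Q, l ≤ s.re)
    (Φ : C(Q, ℂ) →L[ℂ] ℂ) {w : ℂ} (hw : 1 - l < w.re) :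
    LSeries (bc Φ) w = Φ (mkC Q (fun s ↦ psi (s + w) + (s + w - 1)⁻¹)) := by
  have hre : ∀ s ∈ Q, 1 < (s + w).re := fun s hs ↦ by
    have := hl s hs; simp only [add_re]; linarith
  have hcont : ∀ n : ℕ, Continuous fun s : ℂ ↦
      LSeries.term (fun n ↦ (ArithmeticFunction.vonMangoldt n : ℂ)) (s + w) n := by
    intro n
    rcases eq_or_ne n 0 with rfl | hn
    · simpa using continuous_const
    · simp only [LSeries.term_def₀ (f := fun n ↦ (ArithmeticFunction.vonMangoldt n : ℂ)) (by simp)]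
      exact continuous_const.mul ((cpow_cont hn).comp (continuous_id.add continuous_const))
  have hS : LSeriesSummable (fun n ↦ (ArithmeticFunction.vonMangoldt n : ℂ)) ((l + w.re : ℝ) : ℂ) :=
    ArithmeticFunction.LSeriesSummable_vonMangoldt (by rw [ofReal_re]; linarith)
  have hX : Summable fun n ↦ mkC Q (fun s ↦
      LSeries.term (fun n ↦ (ArithmeticFunction.vonMangoldt n : ℂ)) (s + w) n) := by
    refine Summable.of_norm_bounded hS.norm fun n ↦ ?_
    refine mkC_norm_le (hcont n).continuousOn (norm_nonneg _) fun s hs ↦ ?_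
    exact LSeries.norm_term_le_of_re_le_re _ (by have := hl s hs; simp; linarith) _
  have hterm : ∀ n, LSeries.term (bc Φ) w n = Φ (mkC Q (fun s ↦
      LSeries.term (fun n ↦ (ArithmeticFunction.vonMangoldt n : ℂ)) (s + w) n)) := by
    intro n
    rw [LSeries.term_def₀ (by simp [bc])]
    rcases eq_or_ne n 0 with rfl | hn
    · simp only [LSeries.term_zero]
      have : mkC Q (fun _ ↦ (0 : ℂ)) = 0 := by
        ext x; rw [mkC_apply continuousOn_const]; rfl
      rw [this]; simp [bc]
    · have hc : mkC Q (fun s ↦ LSeries.term (fun n ↦ (ArithmeticFunction.vonMangoldt n : ℂ)) (s + w) n)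
          = mkC Q (fun s ↦ ((ArithmeticFunction.vonMangoldt n : ℂ) * (n : ℂ) ^ (-w)) * (n : ℂ) ^ (-s)) := by
        refine mkC_congr (hcont n).continuousOn fun s _ ↦ ?_
        rw [LSeries.term_def₀ (f := fun n ↦ (ArithmeticFunction.vonMangoldt n : ℂ)) (by simp), neg_add,
          cpow_add _ _ (by exact_mod_cast hn)]
        ring
      rw [hc, mkC_const_mul _ (cpow_cont hn).continuousOn, map_smul, smul_eq_mul, bc, ev]
      ring
  rw [LSeries, tsum_congr hterm, ← Φ.map_tsum hX]
  congr 1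
  have hcp : ContinuousOn (fun s ↦ psi (s + w) + (s + w - 1)⁻¹) Q := by
    intro s hs
    have h1 := hre s hs
    refine ContinuousAt.continuousWithinAt ?_
    refine ContinuousAt.add ?_ ?_
    · exact ContinuousAt.comp (g := psi) (f := fun s ↦ s + w) (psi_diff (Zf_ne h1.le)).continuousAt (by fun_prop)
    · refine ContinuousAt.inv₀ (by fun_prop) fun h0 ↦ ?_
      rw [sub_eq_zero.mp h0] at h1; simp at h1
  ext x
  rw [← ContinuousMap.tsum_apply hX, mkC_apply hcp]
  have h1 := hre x x.2
  have := ArithmeticFunction.LSeries_vonMangoldt_eq_deriv_riemannZeta_div h1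
  rw [← one_div, ← psi_eq h1, ← this, LSeries]
  exact tsum_congr fun n ↦ mkC_apply (hcont n).continuousOn x

end PD

open Complex Filter
namespace PD

lemma rectInt_norm_le {f : ℂ → ℂ} {l h t u C : ℝ} (hlh : l ≤ h) (htu : t ≤ u)
    (hf : ∀ z ∈ Bd l h t u, ‖f z‖ ≤ C) :
    ‖rectInt f l h t u‖ ≤ C * (2 * (h - l) + 2 * (u - t)) := by
  have hb : ‖∫ x in l..h, f (x + t * I)‖ ≤ C * |h - l| :=
    intervalIntegral.norm_integral_le_of_norm_le_const fun x hx ↦ hf _ (mem_bd_bot htu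
      (by rw [Set.uIoc_of_le hlh] at hx; exact Set.Ioc_subset_Icc_self hx))
  have ht : ‖∫ x in l..h, f (x + u * I)‖ ≤ C * |h - l| :=
    intervalIntegral.norm_integral_le_of_norm_le_const fun x hx ↦ hf _ (mem_bd_top htu
      (by rw [Set.uIoc_of_le hlh] at hx; exact Set.Ioc_subset_Icc_self hx))
  have hr : ‖∫ x in t..u, f (h + x * I)‖ ≤ C * |u - t| :=
    intervalIntegral.norm_integral_le_of_norm_le_const fun x hx ↦ hf _ (mem_bd_right hlh
      (by rw [Set.uIoc_of_le htu] at hx; exact Set.Ioc_subset_Icc_self hx))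
  have hl : ‖∫ x in t..u, f (l + x * I)‖ ≤ C * |u - t| :=
    intervalIntegral.norm_integral_le_of_norm_le_const fun x hx ↦ hf _ (mem_bd_left hlh
      (by rw [Set.uIoc_of_le htu] at hx; exact Set.Ioc_subset_Icc_self hx))
  rw [abs_of_nonneg (sub_nonneg.mpr hlh)] at hb ht
  rw [abs_of_nonneg (sub_nonneg.mpr htu)] at hr hl
  unfold rectInt
  refine (norm_sub_le _ _).trans ?_
  refine (add_le_add ((norm_add_le _ _).trans (add_le_add (norm_sub_le _ _) le_rfl)) le_rfl).trans ?_
  simp only [norm_mul, norm_I, one_mul]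
  linarith

noncomputable def extC {Q : Set ℂ} (f : C(Q, ℂ)) (z : ℂ) : ℂ :=
  open Classical in if hz : z ∈ Q then f ⟨z, hz⟩ else 0

lemma extC_apply {Q : Set ℂ} (f : C(Q, ℂ)) {z : ℂ} (hz : z ∈ Q) : extC f z = f ⟨z, hz⟩ := by
  rw [extC, dif_pos hz]

lemma extC_cont {Q : Set ℂ} (f : C(Q, ℂ)) : ContinuousOn (extC f) Q := by
  rw [continuousOn_iff_continuous_domRestrict]
  have : Q.domRestrict (extC f) = f := by
    funext z; exact extC_apply f z.2
  rw [this]; exact f.continuous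

lemma rect_clm {l h t u : ℝ} (hlh : l ≤ h) (htu : t ≤ u) {M : ℂ → ℂ}
    (hM : ContinuousOn M (Bd l h t u)) :
    ∃ L : C(Rc l h t u, ℂ) →L[ℂ] ℂ, ∀ f : ℂ → ℂ, ContinuousOn f (Rc l h t u) →
      L (mkC _ f) = rectInt (fun z ↦ f z * M z) l h t u := by
  classical
  have hcs := isCompact_iff_compactSpace.mp (Rc_compact l h t u)
  have hBc : IsCompact (Bd l h t u) := (Rc_compact l h t u).diff (Ro_open l h t u)
  obtain ⟨C, hC⟩ := hBc.exists_bound_of_continuousOn hM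
  have hem : ∀ f, ContinuousOn (fun z ↦ extC f z * M z) (Bd l h t u) := fun f ↦
    ((extC_cont f).mono Set.sdiff_subset).mul hM
  obtain ⟨L0, hL0⟩ : ∃ L0 : C(Rc l h t u, ℂ) →ₗ[ℂ] ℂ, ∀ f,
      L0 f = rectInt (fun z ↦ extC f z * M z) l h t u := by
    refine ⟨{ toFun := fun f ↦ rectInt (fun z ↦ extC f z * M z) l h t u, map_add' := ?_, map_smul' := ?_ },
      fun f ↦ rfl⟩
    · intro f g
      rw [← rectInt_add hlh htu (hem f) (hem g)]
      refine rectInt_congr hlh htu fun z hz ↦ ?_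
      rw [extC_apply _ hz.1, extC_apply _ hz.1, extC_apply _ hz.1, ContinuousMap.add_apply, add_mul]
    · intro c f
      rw [RingHom.id_apply, smul_eq_mul, ← rectInt_const_mul]
      refine rectInt_congr hlh htu fun z hz ↦ ?_
      rw [extC_apply _ hz.1, extC_apply _ hz.1, ContinuousMap.smul_apply, smul_eq_mul, mul_assoc]
  have hbound : ∀ f, ‖L0 f‖ ≤ (max C 0 * (2 * (h - l) + 2 * (u - t))) * ‖f‖ := by
    intro f
    have : ‖L0 f‖ ≤ (‖f‖ * max C 0) * (2 * (h - l) + 2 * (u - t)) := by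
      rw [hL0]
      refine rectInt_norm_le hlh htu fun z hz ↦ ?_
      rw [norm_mul]
      refine mul_le_mul ?_ ((hC z hz).trans (le_max_left _ _)) (norm_nonneg _) (norm_nonneg _)
      rw [extC_apply _ hz.1]
      exact f.norm_coe_le_norm _
    linarith
  refine ⟨L0.mkContinuous _ hbound, fun f hf ↦ ?_⟩
  rw [LinearMap.mkContinuous_apply, hL0]
  refine rectInt_congr hlh htu fun z hz ↦ ?_
  rw [extC_apply _ hz.1, mkC_apply hf]

lemma ident {U V : Set ℂ} (hU : IsOpen U) (hUc : Convex ℝ U) {f g : ℂ → ℂ}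
    (hf : DifferentiableOn ℂ f U) (hg : DifferentiableOn ℂ g U) (hV : IsOpen V)
    {z0 : ℂ} (hz0 : z0 ∈ U) (hz1 : z0 ∈ V) (h : ∀ z ∈ U, z ∈ V → f z = g z) :
    ∀ z ∈ U, f z = g z := by
  refine (hf.analyticOnNhd hU).eqOn_of_preconnected_of_eventuallyEq (hg.analyticOnNhd hU)
    hUc.isPreconnected hz0 ?_
  filter_upwards [hU.mem_nhds hz0, hV.mem_nhds hz1] with z h1 h2 using h z h1 h2

noncomputable def NN {Q : Set ℂ} (Φ : C(Q, ℂ) →L[ℂ] ℂ) (z : ℂ) : ℂ :=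
  Φ (mkC Q (fun s ↦ psi (s + 1 - z))) - LSeries (bc Φ) (1 - z)

lemma NN_eq {Q : Set ℂ} [CompactSpace Q] {l : ℝ} (hl : ∀ s ∈ Q, l ≤ s.re)
    (Φ : C(Q, ℂ) →L[ℂ] ℂ) {z : ℂ} (hz : z.re < l) : NN Φ z = ct Φ z := by
  have hre : ∀ s ∈ Q, 1 < (s + 1 - z).re := fun s hs ↦ by
    have := hl s hs; simp only [add_re, sub_re, one_re]; linarith
  have hc1 : ContinuousOn (fun s ↦ psi (s + 1 - z)) Q := fun s hs ↦
    (ContinuousAt.comp (g := psi) (f := fun s ↦ s + 1 - z)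
      (psi_diff (Zf_ne (hre s hs).le)).continuousAt (by fun_prop)).continuousWithinAt
  have hc2 : ContinuousOn (fun s ↦ (z - s)⁻¹) Q := fun s hs ↦ by
    refine (ContinuousAt.inv₀ (by fun_prop) fun h0 ↦ ?_).continuousWithinAt
    have := hl s hs
    rw [← sub_eq_zero.mp h0] at this; linarith
  have hc3 : ContinuousOn (fun s ↦ (-1 : ℂ) * (z - s)⁻¹) Q := continuousOn_const.mul hc2
  rw [NN, b_eq hl Φ (by simp; linarith)]
  have : mkC Q (fun s ↦ psi (s + (1 - z)) + (s + (1 - z) - 1)⁻¹) =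
      mkC Q (fun s ↦ psi (s + 1 - z) + (-1 : ℂ) * (z - s)⁻¹) := by
    symm
    refine mkC_congr (hc1.add hc3) fun s _ ↦ ?_
    rw [add_sub_assoc, neg_one_mul, ← inv_neg]; congr 2; ring
  rw [this, mkC_add hc1 hc3, mkC_const_mul _ hc2, map_add, map_smul, ct]
  simp

lemma NN_diff {Q : Set ℂ} (hQ : IsCompact Q) {l δ y₁ y₂ : ℝ} (hl : ∀ s ∈ Q, l ≤ s.re)
    (hl12 : 1 / 2 < l) (hy : ∀ s ∈ Q, y₁ < s.im ∧ s.im < y₂)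
    (hδ : ∀ s, 1 - δ < s.re → |s.im| ≤ y₂ - y₁ → Zf s ≠ 0) (hl1 : l + δ ≤ 1)
    (Φ : C(Q, ℂ) →L[ℂ] ℂ) (m : ℕ)
    (hsum : Summable fun p : ℕ ↦ if p.Prime then ‖ev Φ p‖ / (Real.log p) ^ m else 0)
    {S : Set ℂ} (hS : IsOpen S) (hS' : ∀ z ∈ S, z.re < l + δ ∧ y₁ < z.im ∧ z.im < y₂) :
    DifferentiableOn ℂ (NN Φ) S := by
  have := isCompact_iff_compactSpace.mp hQ
  have hne : ∀ z ∈ S, ∀ s ∈ Q, Zf (s + 1 - z) ≠ 0 := fun z hz s hs ↦ by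
    have h1 := hl s hs
    have h2 := hy s hs
    have h3 := hS' z hz
    refine hδ _ ?_ ?_
    · simp; linarith
    · simp only [sub_im, add_im, one_im, abs_le]; constructor <;> linarith
  refine DifferentiableOn.sub ?_ ?_
  · refine functional_diff hQ hS (F := fun z s ↦ psi (s + 1 - z)) ?_ ?_ Φ
    · rintro ⟨z, s⟩ ⟨hz, hs⟩
      have hc : ContinuousAt psi (s + 1 - z) := (psi_diff (hne z hz s hs)).continuousAt
      exact (hc.comp_of_eq (f := fun q : ℂ × ℂ ↦ q.2 + 1 - q.1) (x := (z, s))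
        (by fun_prop) rfl).continuousWithinAt
    · intro s hs z hz
      have hc : DifferentiableAt ℂ psi (s + 1 - z) := psi_diff (hne z hz s hs)
      have hd : DifferentiableAt ℂ (fun z : ℂ ↦ s + 1 - z) z := by fun_prop
      exact (DifferentiableAt.comp z (g := psi) (f := fun z : ℂ ↦ s + 1 - z) hc
        hd).differentiableWithinAt
  · refine (b_diff hl12 hl Φ m hsum).comp (by fun_prop) fun z hz ↦ ?_
    have h3 := hS' z hz
    simp only [Set.mem_ofPred_eq, sub_re, one_re]; linarith

lemma Ro_convex (l h t u : ℝ) : Convex ℝ (Ro l h t u) := by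
  have : Ro l h t u = Complex.reLm ⁻¹' Set.Ioo l h ∩ Complex.imLm ⁻¹' Set.Ioo t u := by
    ext z; simp [Ro, and_assoc]
  rw [this]; exact ((convex_Ioo _ _).linear_preimage _).inter ((convex_Ioo _ _).linear_preimage _)

/-- equality of the two continuations off the rectangle -/
lemma NN_ct {l h t u δ y₁ y₂ : ℝ} (hl12 : 1 / 2 < l) (htu : t ≤ u) (hδ0 : 0 < δ)
    (hy1 : y₁ < t) (hy2 : u < y₂)
    (hδ : ∀ s, 1 - δ < s.re → |s.im| ≤ y₂ - y₁ → Zf s ≠ 0) (hl1 : l + δ ≤ 1)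
    (Φ : C(Rc l h t u, ℂ) →L[ℂ] ℂ) (m : ℕ)
    (hsum : Summable fun p : ℕ ↦ if p.Prime then ‖ev Φ p‖ / (Real.log p) ^ m else 0)
    {z : ℂ} (hz1 : z.re < l + δ) (hz2 : y₁ < z.im) (hz3 : z.im < y₂) (hzQ : z ∉ Rc l h t u) :
    NN Φ z = ct Φ z := by
  have hQ := Rc_compact l h t u
  have := isCompact_iff_compactSpace.mp hQ
  have hlQ : ∀ s ∈ Rc l h t u, l ≤ s.re := fun s hs ↦ hs.1
  have hyQ : ∀ s ∈ Rc l h t u, y₁ < s.im ∧ s.im < y₂ := fun s hs ↦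
    ⟨by linarith [hs.2.2.1], by linarith [hs.2.2.2]⟩
  have hA : ∀ z : ℂ, z.re < l → NN Φ z = ct Φ z := fun z hz ↦ NN_eq hlQ Φ hz
  have key : ∀ l' t' u' : ℝ, y₁ ≤ t' → u' ≤ y₂ → Ro l' (l + δ) t' u' ⊆ (Rc l h t u)ᶜ →
      ∀ V : Set ℂ, IsOpen V → ∀ z0 ∈ Ro l' (l + δ) t' u', z0 ∈ V →
      (∀ z ∈ Ro l' (l + δ) t' u', z ∈ V → NN Φ z = ct Φ z) →
      ∀ z ∈ Ro l' (l + δ) t' u', NN Φ z = ct Φ z := by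
    intro l' t' u' h1 h2 h3 V hV z0 hz0 hz1 he
    refine ident (Ro_open _ _ _ _) (Ro_convex _ _ _ _) ?_ ((ct_diff hQ Φ).mono h3) hV hz0 hz1 he
    exact NN_diff hQ hlQ hl12 hyQ hδ hl1 Φ m hsum (Ro_open _ _ _ _) fun z hz ↦
      ⟨hz.2.1, h1.trans_lt hz.2.2.1, hz.2.2.2.trans_le h2⟩
  have hVl : IsOpen {z : ℂ | z.re < l} := isOpen_lt continuous_re continuous_const
  have hVu : IsOpen {z : ℂ | u < z.im} := isOpen_lt continuous_const continuous_im
  have hBp : ∀ z : ℂ, z.re < l + δ → u < z.im → z.im < y₂ → NN Φ z = ct Φ z := by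
    intro z h1 h2 h3
    refine key (min z.re l - 2) u y₂ (by linarith) le_rfl (fun w hw hw' ↦ ?_) _ hVl
      (⟨min z.re l - 1, (u + y₂) / 2⟩) ⟨?_, ?_, ?_, ?_⟩ ?_ (fun w _ hw ↦ hA w hw) z ⟨?_, h1, h2, h3⟩
    · linarith [hw.2.2.1, hw'.2.2.2]
    · simp
    · simp only; linarith [min_le_right z.re l]
    · simp only; linarith
    · simp only; linarith
    · simp only [Set.mem_ofPred_eq]; linarith [min_le_right z.re l]
    · linarith [min_le_left z.re l]
  rcases lt_or_ge z.re l with h1 | h1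
  · exact hA z h1
  rcases lt_or_ge u z.im with h2 | h2
  · exact hBp z hz1 h2 hz3
  rcases lt_or_ge z.im t with h3 | h3
  · refine key (min z.re l - 2) y₁ t le_rfl (by linarith) (fun w hw hw' ↦ ?_) _ hVl
      (⟨min z.re l - 1, (y₁ + t) / 2⟩) ⟨?_, ?_, ?_, ?_⟩ ?_ (fun w _ hw ↦ hA w hw) z ⟨?_, hz1, hz2, h3⟩
    · linarith [hw.2.2.2, hw'.2.2.1]
    · simp
    · simp only; linarith [min_le_right z.re l]
    · simp only; linarith
    · simp only; linarith
    · simp only [Set.mem_ofPred_eq]; linarith [min_le_right z.re l]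
    · linarith [min_le_left z.re l]
  have h4 : h < z.re := by
    by_contra hc
    exact hzQ ⟨h1, not_lt.mp hc, h3, h2⟩
  refine key h y₁ y₂ le_rfl le_rfl (fun w hw hw' ↦ ?_) _ hVu
      (⟨z.re, (u + y₂) / 2⟩) ⟨h4, hz1, ?_, ?_⟩ ?_ (fun w hw hw' ↦ hBp w hw.2.1 hw' hw.2.2.2) z
      ⟨h4, hz1, hz2, hz3⟩
  · linarith [hw.1, hw'.2.1]
  · simp only; linarith
  · simp only; linarith
  · simp only [Set.mem_ofPred_eq]; linarith

end PD

open Complex Filter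
namespace PD

/-- one step: shrink the rectangle from the left -/
lemma step {a b y₁ y₂ l h t u δ : ℝ} (ha : 1 / 2 < a) (hal : a < l) (hlh : l ≤ h) (hhb : h < b)
    (hy1 : y₁ < t) (htu : t ≤ u) (hy2 : u < y₂) (hδ0 : 0 < δ)
    (hδ : ∀ s, 1 - δ < s.re → |s.im| ≤ y₂ - y₁ → Zf s ≠ 0) (hb1 : b + δ ≤ 1)
    (Φ : C(Rc l h t u, ℂ) →L[ℂ] ℂ) (m : ℕ)
    (hsum : Summable fun p : ℕ ↦ if p.Prime then ‖ev Φ p‖ / (Real.log p) ^ m else 0) :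
    (∀ f : ℂ → ℂ, DifferentiableOn ℂ f (Ro a b y₁ y₂) → Φ (mkC _ f) = 0) ∨
    ∃ l' h' t' u' : ℝ, a < l' ∧ l' ≤ h' ∧ h' < b ∧ y₁ < t' ∧ t' ≤ u' ∧ u' < y₂ ∧
      h' - l' ≤ h - l - δ / 4 ∧
      ∃ Φ' : C(Rc l' h' t' u', ℂ) →L[ℂ] ℂ,
        ∀ f : ℂ → ℂ, DifferentiableOn ℂ f (Ro a b y₁ y₂) → Φ' (mkC _ f) = Φ (mkC _ f) := by
  classical
  have hQ := Rc_compact l h t u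
  obtain ⟨ε, hε0, hε1, hε2, hε3, hε4, hε5⟩ : ∃ ε > 0, ε ≤ δ / 4 ∧ ε < l - a ∧ ε < b - h ∧
      ε < t - y₁ ∧ ε < y₂ - u := by
    have hm : 0 < min (min (δ / 4) (l - a)) (min (b - h) (min (t - y₁) (y₂ - u))) := by
      simp only [lt_min_iff]; refine ⟨⟨?_, ?_⟩, ?_, ?_, ?_⟩ <;> linarith
    set e := min (min (δ / 4) (l - a)) (min (b - h) (min (t - y₁) (y₂ - u))) with he
    have h1 : e ≤ δ / 4 := (min_le_left _ _).trans (min_le_left _ _)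
    have h2 : e ≤ l - a := (min_le_left _ _).trans (min_le_right _ _)
    have h3 : e ≤ b - h := (min_le_right _ _).trans (min_le_left _ _)
    have h4 : e ≤ t - y₁ := (min_le_right _ _).trans ((min_le_right _ _).trans (min_le_left _ _))
    have h5 : e ≤ y₂ - u := (min_le_right _ _).trans ((min_le_right _ _).trans (min_le_right _ _))
    exact ⟨e / 2, by linarith, by linarith, by linarith, by linarith, by linarith, by linarith⟩
  have hl12 : 1 / 2 < l := by linarith
  have hl1 : l + δ ≤ 1 := by linarith
  have hU : IsOpen (Ro a b y₁ y₂) := Ro_open _ _ _ _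
  have hlQ : ∀ s ∈ Rc l h t u, l ≤ s.re := fun s hs ↦ hs.1
  have hyQ : ∀ s ∈ Rc l h t u, y₁ < s.im ∧ s.im < y₂ := fun s hs ↦
    ⟨by linarith [hs.2.2.1], by linarith [hs.2.2.2]⟩
  -- the strip
  set S : Set ℂ := Ro a (l + δ) y₁ y₂ with hS
  have hSo : IsOpen S := Ro_open _ _ _ _
  have hND : DifferentiableOn ℂ (NN Φ) S :=
    NN_diff hQ hlQ hl12 hyQ hδ hl1 Φ m hsum hSo fun z hz ↦ hz.2
  have hEq : ∀ z ∈ S, z ∉ Rc l h t u → NN Φ z = ct Φ z := fun z hz hzQ ↦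
    NN_ct hl12 htu hδ0 hy1 hy2 hδ hl1 Φ m hsum hz.2.1 hz.2.2.1 hz.2.2.2 hzQ
  -- outer rectangle
  have hQo : Rc l h t u ⊆ Ro (l - ε) (h + ε) (t - ε) (u + ε) := fun z hz ↦
    ⟨by linarith [hz.1], by linarith [hz.2.1], by linarith [hz.2.2.1], by linarith [hz.2.2.2]⟩
  have hQR : Rc (l - ε) (h + ε) (t - ε) (u + ε) ⊆ Ro a b y₁ y₂ := fun z hz ↦
    ⟨by linarith [hz.1], by linarith [hz.2.1], by linarith [hz.2.2.1], by linarith [hz.2.2.2]⟩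
  have hrep : ∀ f : ℂ → ℂ, DifferentiableOn ℂ f (Ro a b y₁ y₂) →
      rectInt (fun z ↦ f z * ct Φ z) (l - ε) (h + ε) (t - ε) (u + ε) = 2 * Real.pi * I * Φ (mkC _ f) :=
    fun f hf ↦ ct_rep hQ Φ hU hf (by linarith) (by linarith) hQR hQo
  have hpi : (2 * Real.pi * I : ℂ) ≠ 0 := by simp [Real.pi_ne_zero]
  set M : ℂ → ℂ := fun z ↦ if z ∈ Rc l h t u then NN Φ z else ct Φ z with hM
  have hMS : ∀ z ∈ S, M z = NN Φ z := by
    intro z hz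
    simp only [hM]; split_ifs with hq
    · rfl
    · exact (hEq z hz hq).symm
  have hMQ : ∀ z ∉ Rc l h t u, M z = ct Φ z := fun z hz ↦ if_neg hz
  have hMdS : DifferentiableOn ℂ M S := hND.congr hMS
  have hMdQ : DifferentiableOn ℂ M (Rc l h t u)ᶜ := (ct_diff hQ Φ).congr hMQ
  have hMc : ∀ z, z ∈ S ∨ z ∉ Rc l h t u → ContinuousAt M z := by
    rintro z (hz | hz)
    · exact hMdS.continuousOn.continuousAt (hSo.mem_nhds hz)
    · exact hMdQ.continuousOn.continuousAt (hQ.isClosed.isOpen_compl.mem_nhds hz)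
  have hbdQ : ∀ z ∈ Bd (l - ε) (h + ε) (t - ε) (u + ε), z ∉ Rc l h t u := fun z hz hq ↦ hz.2 (hQo hq)
  have hrepM : ∀ f : ℂ → ℂ, DifferentiableOn ℂ f (Ro a b y₁ y₂) →
      rectInt (fun z ↦ f z * M z) (l - ε) (h + ε) (t - ε) (u + ε) = 2 * Real.pi * I * Φ (mkC _ f) := by
    intro f hf
    rw [← hrep f hf]
    exact rectInt_congr (by linarith) (by linarith) fun z hz ↦ by rw [hMQ z (hbdQ z hz)]
  have hSR : S ⊆ Ro a b y₁ y₂ ∨ True := Or.inr trivial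
  rcases le_or_gt (h + ε) (l + δ / 2) with hcase | hcase
  · left
    intro f hf
    have hsub : Rc (l - ε) (h + ε) (t - ε) (u + ε) ⊆ S := fun z hz ↦
      ⟨by linarith [hz.1], by linarith [hz.2.1], by linarith [hz.2.2.1], by linarith [hz.2.2.2]⟩
    have h0 := rectInt_zero (f := fun z ↦ f z * M z) (by linarith) (by linarith)
      ((hf.mono hQR).mul (hMdS.mono hsub))
    rw [hrepM f hf] at h0
    exact (mul_eq_zero.mp h0).resolve_left hpi
  · right
    have hMbd : ContinuousOn M (Bd (l + δ / 2) (h + ε) (t - ε) (u + ε)) := by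
      intro z hz
      refine (hMc z ?_).continuousWithinAt
      by_cases hq : z ∈ Rc l h t u
      · left
        obtain ⟨⟨q1, q2, q3, q4⟩, q5⟩ := hz
        have hle : z.re ≤ l + δ / 2 := by
          by_contra hc
          exact q5 ⟨not_le.mp hc, by linarith [hq.2.1], by linarith [hq.2.2.1], by linarith [hq.2.2.2]⟩
        exact ⟨by linarith, by linarith, by linarith, by linarith⟩
      · right; exact hq
    obtain ⟨L, hL⟩ := rect_clm hcase.le (by linarith) hMbd
    refine ⟨l + δ / 2, h + ε, t - ε, u + ε, by linarith, hcase.le, by linarith, by linarith, by linarith,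
      by linarith, by linarith, (2 * Real.pi * I : ℂ)⁻¹ • L, fun f hf ↦ ?_⟩
    have hsub : Rc (l - ε) (l + δ / 2) (t - ε) (u + ε) ⊆ S := fun z hz ↦
      ⟨by linarith [hz.1], by linarith [hz.2.1], by linarith [hz.2.2.1], by linarith [hz.2.2.2]⟩
    have hsub2 : Rc (l - ε) (l + δ / 2) (t - ε) (u + ε) ⊆ Rc (l - ε) (h + ε) (t - ε) (u + ε) :=
      fun z hz ↦ ⟨hz.1, hz.2.1.trans hcase.le, hz.2.2⟩
    have hsub3 : Rc (l + δ / 2) (h + ε) (t - ε) (u + ε) ⊆ Rc (l - ε) (h + ε) (t - ε) (u + ε) :=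
      fun z hz ↦ ⟨by linarith [hz.1], hz.2⟩
    have h0 := rectInt_zero (f := fun z ↦ f z * M z) (by linarith) (by linarith)
      ((hf.mono (hsub2.trans hQR)).mul (hMdS.mono hsub))
    have hcts : ContinuousOn (fun z ↦ f z * M z) (Bd (l - ε) (h + ε) (t - ε) (u + ε)) :=
      (hf.continuousOn.mono (Set.sdiff_subset.trans hQR)).mul
        fun z hz ↦ (hMc z (Or.inr (hbdQ z hz))).continuousWithinAt
    have hsp := rectInt_split (c := l + δ / 2) (by linarith) hcase.le (by linarith) hcts
    rw [h0, zero_add, hrepM f hf] at hsp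
    have hLf := hL f (hf.continuousOn.mono (hsub3.trans hQR))
    rw [← hsp] at hLf
    rw [ContinuousLinearMap.smul_apply, hLf, smul_eq_mul, inv_mul_cancel_left₀ hpi]

lemma ev_congr {a b y₁ y₂ l h t u l' h' t' u' : ℝ} {Φ : C(Rc l h t u, ℂ) →L[ℂ] ℂ}
    {Φ' : C(Rc l' h' t' u', ℂ) →L[ℂ] ℂ}
    (H : ∀ f : ℂ → ℂ, DifferentiableOn ℂ f (Ro a b y₁ y₂) → Φ' (mkC _ f) = Φ (mkC _ f)) {n : ℕ}
    (hn : n ≠ 0) : ev Φ' n = ev Φ n := by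
  refine H _ ?_
  intro s _
  have hn' : (n : ℂ) ≠ 0 := by exact_mod_cast hn
  exact (DifferentiableAt.const_cpow (by fun_prop) (Or.inl hn')).differentiableWithinAt

/-- completeness: a functional with summable values annihilates holomorphic functions -/
lemma annih_aux {a b y₁ y₂ δ : ℝ} (ha : 1 / 2 < a) (hδ0 : 0 < δ)
    (hδ : ∀ s, 1 - δ < s.re → |s.im| ≤ y₂ - y₁ → Zf s ≠ 0) (hb1 : b + δ ≤ 1) (m n : ℕ) :
    ∀ l h t u : ℝ, a < l → l ≤ h → h < b → y₁ < t → t ≤ u → u < y₂ → h - l < n * (δ / 4) →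
    ∀ Φ : C(Rc l h t u, ℂ) →L[ℂ] ℂ,
    (Summable fun p : ℕ ↦ if p.Prime then ‖ev Φ p‖ / (Real.log p) ^ m else 0) →
    ∀ f : ℂ → ℂ, DifferentiableOn ℂ f (Ro a b y₁ y₂) → Φ (mkC _ f) = 0 := by
  induction n with
  | zero =>
    intro l h t u _ h1 _ _ _ _ h2
    simp at h2; linarith
  | succ n ih =>
    intro l h t u h1 h2 h3 h4 h5 h6 h7 Φ hsum f hf
    rcases step ha h1 h2 h3 h4 h5 h6 hδ0 hδ hb1 Φ m hsum with hz |
      ⟨l', h', t', u', k1, k2, k3, k4, k5, k6, k7, Φ', hΦ⟩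
    · exact hz f hf
    · rw [← hΦ f hf]
      refine ih l' h' t' u' k1 k2 k3 k4 k5 k6 ?_ Φ' ?_ f hf
      · push_cast at h7; linarith
      · convert hsum using 2 with p
        split_ifs with hp
        · rw [ev_congr hΦ hp.ne_zero]
        · rfl

lemma annih {a b y₁ y₂ : ℝ} (ha : 1 / 2 < a) (hb1 : b < 1) (m : ℕ)
    {l h t u : ℝ} (h1 : a < l) (h2 : l ≤ h) (h3 : h < b) (h4 : y₁ < t) (h5 : t ≤ u) (h6 : u < y₂)
    (Φ : C(Rc l h t u, ℂ) →L[ℂ] ℂ)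
    (hsum : Summable fun p : ℕ ↦ if p.Prime then ‖ev Φ p‖ / (Real.log p) ^ m else 0)
    {f : ℂ → ℂ} (hf : DifferentiableOn ℂ f (Ro a b y₁ y₂)) : Φ (mkC _ f) = 0 := by
  obtain ⟨δ0, hδ0, hδ⟩ := zero_free (y₂ - y₁)
  have hδ1 : 0 < min δ0 (1 - b) := lt_min hδ0 (by linarith)
  obtain ⟨n, hn⟩ := exists_nat_gt ((h - l) / (min δ0 (1 - b) / 4))
  refine annih_aux ha hδ1 (fun s hs ↦ hδ s ?_) ?_ m n l h t u h1 h2 h3 h4 h5 h6 ?_ Φ hsum f hf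
  · linarith [min_le_left δ0 (1 - b)]
  · linarith [min_le_right δ0 (1 - b)]
  · rwa [div_lt_iff₀ (by positivity)] at hn

end PD

open Complex Filter
namespace PD

lemma dense_abs {E : Type*} [NormedAddCommGroup E] [NormedSpace ℂ E] (x : ℕ → E) (F : E)
    (H : ∀ Φ : E →L[ℂ] ℂ, (Summable fun n ↦ ‖Φ (x n)‖) → Φ F = 0) (N0 : ℕ) {ε : ℝ} (hε : 0 < ε) :
    ∃ N, N0 ≤ N ∧ ∃ a : ℕ → ℂ, (∀ n, ‖a n‖ ≤ 1) ∧
      ‖F - ∑ n ∈ Finset.Ico N0 N, a n • x n‖ < ε := by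
  classical
  let T : ℕ → Set E := fun k ↦ {v | ∃ a : ℕ → ℂ, (∀ n, ‖a n‖ ≤ 1) ∧
    v = ∑ n ∈ Finset.Ico N0 (N0 + k), a n • x n}
  have hmono : Monotone T := by
    intro k k' hk v hv
    obtain ⟨a, ha, rfl⟩ := hv
    refine ⟨fun n ↦ if n < N0 + k then a n else 0, fun n ↦ ?_, ?_⟩
    · dsimp only; split_ifs
      · exact ha n
      · simp
    · have : Finset.Ico N0 (N0 + k) ⊆ Finset.Ico N0 (N0 + k') := Finset.Ico_subset_Ico le_rfl (by omega)
      rw [← Finset.sum_subset this]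
      · refine Finset.sum_congr rfl fun n hn ↦ ?_
        rw [Finset.mem_Ico] at hn
        beta_reduce
        rw [if_pos hn.2]
      · intro n h1 h2
        rw [Finset.mem_Ico] at h1 h2
        beta_reduce
        rw [if_neg (by omega), zero_smul]
  have hconv : Convex ℝ (⋃ k, T k) := by
    refine Directed.convex_iUnion hmono.directed_le fun k ↦ ?_
    rintro v ⟨a, ha, rfl⟩ w ⟨b, hb, rfl⟩ s t hs ht hst
    refine ⟨fun n ↦ (s : ℂ) * a n + (t : ℂ) * b n, fun n ↦ ?_, ?_⟩
    · refine (norm_add_le _ _).trans ?_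
      rw [norm_mul, norm_mul, norm_real, norm_real, Real.norm_of_nonneg hs, Real.norm_of_nonneg ht]
      nlinarith [ha n, hb n]
    · rw [Finset.smul_sum, Finset.smul_sum, ← Finset.sum_add_distrib]
      refine Finset.sum_congr rfl fun n _ ↦ ?_
      rw [add_smul, mul_smul, mul_smul]; rfl
  have h0 : (0 : E) ∈ ⋃ k, T k := Set.mem_iUnion.mpr ⟨0, fun _ ↦ 0, by simp, by simp⟩
  have hF : F ∈ closure (⋃ k, T k) := by
    by_contra hF
    obtain ⟨f, u, hu, huF⟩ := RCLike.geometric_hahn_banach_closed_point (𝕜 := ℂ) hconv.closure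
      isClosed_closure hF
    have hu0 := hu 0 (subset_closure h0)
    have hs : Summable fun n ↦ ‖f (x n)‖ := by
      rw [← summable_nat_add_iff N0]
      refine summable_of_sum_range_le (c := u) (fun _ ↦ norm_nonneg _) fun k ↦ ?_
      have hmem : (∑ n ∈ Finset.Ico N0 (N0 + k), ((starRingEnd ℂ (f (x n))) / ‖f (x n)‖) • x n) ∈ ⋃ k, T k := by
        refine Set.mem_iUnion.mpr ⟨k, _, fun n ↦ ?_, rfl⟩
        rw [norm_div, RCLike.norm_conj, norm_real, norm_norm]
        exact div_self_le_one _
      have := (hu _ (subset_closure hmem)).le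
      refine le_trans (le_of_eq ?_) this
      rw [map_sum, map_sum, Finset.sum_Ico_eq_sum_range, add_tsub_cancel_left]
      refine Finset.sum_congr rfl fun n _ ↦ ?_
      rw [map_smul, smul_eq_mul, add_comm n N0]
      rcases eq_or_ne (f (x (N0 + n))) 0 with h | h
      · simp [h]
      · have hn : (‖f (x (N0 + n))‖ : ℂ) ≠ 0 := by simpa using h
        rw [div_mul_eq_mul_div, mul_comm, Complex.mul_conj, Complex.normSq_eq_norm_sq]
        have : (((‖f (x (N0 + n))‖ ^ 2 : ℝ) : ℂ) / ‖f (x (N0 + n))‖) = ((‖f (x (N0 + n))‖ : ℝ) : ℂ) := by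
          push_cast; field_simp
        rw [this]; simp
    rw [H f hs] at huF
    simp at hu0 huF
    linarith
  obtain ⟨v, hv, hvd⟩ := Metric.mem_closure_iff.mp hF ε hε
  obtain ⟨k, a, ha, rfl⟩ := Set.mem_iUnion.mp hv
  exact ⟨N0 + k, by omega, a, ha, by rwa [dist_eq_norm] at hvd⟩

lemma unimod_dev (a : ℂ) (ha : ‖a‖ ≤ 1) : ∃ v : ℂ, ‖v‖ ≤ 1 ∧ ‖a + v‖ = 1 ∧ ‖a - v‖ = 1 := by
  rcases eq_or_ne a 0 with rfl | h
  · exact ⟨1, by simp, by simp, by simp⟩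
  have hn : ‖a‖ ≠ 0 := by simpa using h
  set r : ℝ := Real.sqrt (1 - ‖a‖ ^ 2) with hr
  have hr2 : r ^ 2 = 1 - ‖a‖ ^ 2 := Real.sq_sqrt (by nlinarith [norm_nonneg a])
  have hr0 : 0 ≤ r := Real.sqrt_nonneg _
  set e : ℂ := a / ‖a‖ with he
  have hen : ‖e‖ = 1 := by rw [he, norm_div, norm_real, norm_norm, div_self hn]
  have hae : a = ‖a‖ * e := by
    have hn' : (‖a‖ : ℂ) ≠ 0 := by exact_mod_cast hn
    rw [he, mul_div_cancel₀ _ hn']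
  have key : ∀ ε : ℝ, ε ^ 2 = 1 → ‖(‖a‖ : ℂ) + (ε * r : ℝ) * I‖ = 1 := by
    intro ε hε
    rw [Complex.norm_add_mul_I, mul_pow, hε, hr2]; simp
  refine ⟨r * I * e, ?_, ?_, ?_⟩
  · rw [norm_mul, hen, norm_mul, norm_I, norm_real, Real.norm_of_nonneg hr0]
    nlinarith [norm_nonneg a]
  · have := key 1 (by norm_num)
    have h2 : a + r * I * e = ((‖a‖ : ℂ) + (1 * r : ℝ) * I) * e := by
      nth_rewrite 1 [hae]; push_cast; ring
    rw [h2, norm_mul, this, hen, one_mul]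
  · have := key (-1) (by norm_num)
    have h2 : a - r * I * e = ((‖a‖ : ℂ) + (-1 * r : ℝ) * I) * e := by
      nth_rewrite 1 [hae]; push_cast; ring
    rw [h2, norm_mul, this, hen, one_mul]

lemma rounding {V : Type*} [AddCommGroup V] [Module ℂ V] (q : V → ℝ)
    (hpar : ∀ u v, q (u + v) + q (u - v) = 2 * (q u + q v))
    (hsm : ∀ (c : ℂ) v, q (c • v) = ‖c‖ ^ 2 * q v) (hq : ∀ v, 0 ≤ q v) (x : ℕ → V) (a : ℕ → ℂ)
    (ha : ∀ n, ‖a n‖ ≤ 1) (S : Finset ℕ) :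
    ∃ b : ℕ → ℂ, (∀ n, ‖b n‖ = 1) ∧ q (∑ n ∈ S, (a n - b n) • x n) ≤ ∑ n ∈ S, q (x n) := by
  classical
  induction S using Finset.induction_on with
  | empty =>
    refine ⟨fun _ ↦ 1, by simp, ?_⟩
    have := hsm 0 0
    simp at this
    simp [this]
  | insert k S hk ih =>
    obtain ⟨b, hb, hqb⟩ := ih
    obtain ⟨v, hv, hv1, hv2⟩ := unimod_dev (a k) (ha k)
    set w := ∑ n ∈ S, (a n - b n) • x n with hw
    have hp := hpar w (v • x k)
    rw [hsm] at hp
    have hv3 : ‖v‖ ^ 2 * q (x k) ≤ q (x k) := by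
      have : ‖v‖ ^ 2 ≤ 1 := by nlinarith [norm_nonneg v]
      nlinarith [hq (x k)]
    have hsumb : ∀ c : ℂ, ∑ n ∈ insert k S, (a n - Function.update b k c n) • x n = (a k - c) • x k + w := by
      intro c
      rw [Finset.sum_insert hk, Function.update_self, hw]
      congr 1
      refine Finset.sum_congr rfl fun n hn ↦ ?_
      rw [Function.update_of_ne]
      rintro rfl; exact hk hn
    have hnb : ∀ c : ℂ, ‖c‖ = 1 → ∀ n, ‖Function.update b k c n‖ = 1 := by
      intro c hc n
      rcases eq_or_ne n k with rfl | h
      · rwa [Function.update_self]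
      · rw [Function.update_of_ne h]; exact hb n
    rw [Finset.sum_insert hk]
    by_cases hc : q (w + v • x k) ≤ q w + q (x k)
    · refine ⟨Function.update b k (a k - v), hnb _ hv2, ?_⟩
      rw [hsumb, sub_sub_cancel, add_comm]; linarith
    · refine ⟨Function.update b k (a k + v), hnb _ hv1, ?_⟩
      have : (a k - (a k + v)) • x k + w = w - v • x k := by
        rw [sub_add_cancel_left, neg_smul]; abel
      rw [hsumb, this]; linarith

end PD

open Complex Filter
namespace PD

/-- arclength boundary integral -/
noncomputable def bI (φ : ℂ → ℝ) (l h t u : ℝ) : ℝ :=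
  (∫ x in l..h, φ (x + t * I)) + (∫ x in l..h, φ (x + u * I)) +
    (∫ y in t..u, φ (h + y * I)) + (∫ y in t..u, φ (l + y * I))

section


lemma bi_bot {l h t u : ℝ} (hlh : l ≤ h) (htu : t ≤ u) {f : ℂ → ℝ} (hf : ContinuousOn f (Bd l h t u)) :
    IntervalIntegrable (fun x : ℝ ↦ f (x + t * I)) MeasureTheory.volume l h := by
  refine ContinuousOn.intervalIntegrable (hf.comp (by fun_prop) fun x hx ↦ mem_bd_bot htu ?_)
  rwa [Set.uIcc_of_le hlh] at hx

lemma bi_top {l h t u : ℝ} (hlh : l ≤ h) (htu : t ≤ u) {f : ℂ → ℝ} (hf : ContinuousOn f (Bd l h t u)) :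
    IntervalIntegrable (fun x : ℝ ↦ f (x + u * I)) MeasureTheory.volume l h := by
  refine ContinuousOn.intervalIntegrable (hf.comp (by fun_prop) fun x hx ↦ mem_bd_top htu ?_)
  rwa [Set.uIcc_of_le hlh] at hx

lemma bi_right {l h t u : ℝ} (hlh : l ≤ h) (htu : t ≤ u) {f : ℂ → ℝ} (hf : ContinuousOn f (Bd l h t u)) :
    IntervalIntegrable (fun x : ℝ ↦ f (h + x * I)) MeasureTheory.volume t u := by
  refine ContinuousOn.intervalIntegrable (hf.comp (by fun_prop) fun x hx ↦ mem_bd_right hlh ?_)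
  rwa [Set.uIcc_of_le htu] at hx

lemma bi_left {l h t u : ℝ} (hlh : l ≤ h) (htu : t ≤ u) {f : ℂ → ℝ} (hf : ContinuousOn f (Bd l h t u)) :
    IntervalIntegrable (fun x : ℝ ↦ f (l + x * I)) MeasureTheory.volume t u := by
  refine ContinuousOn.intervalIntegrable (hf.comp (by fun_prop) fun x hx ↦ mem_bd_left hlh ?_)
  rwa [Set.uIcc_of_le htu] at hx

lemma bI_add {l h t u : ℝ} (hlh : l ≤ h) (htu : t ≤ u) {f g : ℂ → ℝ} (hf : ContinuousOn f (Bd l h t u)) (hg : ContinuousOn g (Bd l h t u)) :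
    bI (fun z ↦ f z + g z) l h t u = bI f l h t u + bI g l h t u := by
  unfold bI
  rw [intervalIntegral.integral_add (bi_bot hlh htu hf) (bi_bot hlh htu hg),
    intervalIntegral.integral_add (bi_top hlh htu hf) (bi_top hlh htu hg),
    intervalIntegral.integral_add (bi_left hlh htu hf) (bi_left hlh htu hg),
    intervalIntegral.integral_add (bi_right hlh htu hf) (bi_right hlh htu hg)]
  ring

lemma bI_mono {l h t u : ℝ} (hlh : l ≤ h) (htu : t ≤ u) {f g : ℂ → ℝ} (hf : ContinuousOn f (Bd l h t u)) (hg : ContinuousOn g (Bd l h t u))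
    (hfg : ∀ z ∈ Bd l h t u, f z ≤ g z) : bI f l h t u ≤ bI g l h t u := by
  unfold bI
  refine add_le_add (add_le_add (add_le_add ?_ ?_) ?_) ?_
  · exact intervalIntegral.integral_mono_on hlh (bi_bot hlh htu hf) (bi_bot hlh htu hg)
      fun x hx ↦ hfg _ (mem_bd_bot htu hx)
  · exact intervalIntegral.integral_mono_on hlh (bi_top hlh htu hf) (bi_top hlh htu hg)
      fun x hx ↦ hfg _ (mem_bd_top htu hx)
  · exact intervalIntegral.integral_mono_on htu (bi_right hlh htu hf) (bi_right hlh htu hg)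
      fun x hx ↦ hfg _ (mem_bd_right hlh hx)
  · exact intervalIntegral.integral_mono_on htu (bi_left hlh htu hf) (bi_left hlh htu hg)
      fun x hx ↦ hfg _ (mem_bd_left hlh hx)

lemma rectInt_le_bI {l h t u : ℝ} (hlh : l ≤ h) (htu : t ≤ u) (f : ℂ → ℂ) : ‖rectInt f l h t u‖ ≤ bI (fun z ↦ ‖f z‖) l h t u := by
  unfold rectInt bI
  refine (norm_sub_le _ _).trans ?_
  refine (add_le_add ((norm_add_le _ _).trans (add_le_add (norm_sub_le _ _) le_rfl)) le_rfl).trans ?_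
  simp only [norm_mul, norm_I, one_mul]
  gcongr <;> exact intervalIntegral.norm_integral_le_integral_norm (by assumption)

end

lemma bI_const (c : ℝ) (l h t u : ℝ) :
    bI (fun _ ↦ c) l h t u = c * (2 * (h - l) + 2 * (u - t)) := by
  unfold bI; simp; ring

lemma bI_const_mul (c : ℝ) (f : ℂ → ℝ) (l h t u : ℝ) :
    bI (fun z ↦ c * f z) l h t u = c * bI f l h t u := by
  unfold bI
  simp only [intervalIntegral.integral_const_mul]
  ring

lemma bI_congr {l h t u : ℝ} (hlh : l ≤ h) (htu : t ≤ u) {f g : ℂ → ℝ} (hf : ContinuousOn f (Bd l h t u))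
    (hfg : ∀ z ∈ Bd l h t u, f z = g z) : bI f l h t u = bI g l h t u := by
  have hg : ContinuousOn g (Bd l h t u) := hf.congr fun z hz ↦ (hfg z hz).symm
  exact le_antisymm (bI_mono hlh htu hf hg fun z hz ↦ (hfg z hz).le)
    (bI_mono hlh htu hg hf fun z hz ↦ (hfg z hz).ge)

/-- the quadratic form -/
noncomputable def qf (l h t u : ℝ) (g : C(Rc l h t u, ℂ)) : ℝ :=
  bI (fun z ↦ ‖extC g z‖ ^ 2) l h t u

section


lemma qf_cont {l h t u : ℝ} (g : C(Rc l h t u, ℂ)) : ContinuousOn (fun z ↦ ‖extC g z‖ ^ 2) (Bd l h t u) :=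
  (((extC_cont g).mono Set.sdiff_subset).norm).pow 2

lemma qf_par {l h t u : ℝ} (hlh : l ≤ h) (htu : t ≤ u) (f g : C(Rc l h t u, ℂ)) :
    qf l h t u (f + g) + qf l h t u (f - g) = 2 * (qf l h t u f + qf l h t u g) := by
  unfold qf
  rw [← bI_add hlh htu (qf_cont _) (qf_cont _), ← bI_add hlh htu (qf_cont _) (qf_cont _),
    ← bI_const_mul]
  refine bI_congr hlh htu ((qf_cont _).add (qf_cont _)) fun z hz ↦ ?_
  rw [extC_apply _ hz.1, extC_apply _ hz.1, extC_apply _ hz.1, extC_apply _ hz.1,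
    ContinuousMap.add_apply, ContinuousMap.sub_apply]
  have := parallelogram_law_with_norm ℝ (f ⟨z, hz.1⟩) (g ⟨z, hz.1⟩)
  nlinarith

lemma qf_smul {l h t u : ℝ} (hlh : l ≤ h) (htu : t ≤ u) (c : ℂ) (g : C(Rc l h t u, ℂ)) :
    qf l h t u (c • g) = ‖c‖ ^ 2 * qf l h t u g := by
  unfold qf
  rw [← bI_const_mul]
  refine bI_congr hlh htu (qf_cont _) fun z hz ↦ ?_
  rw [extC_apply _ hz.1, extC_apply _ hz.1, ContinuousMap.smul_apply, norm_smul, mul_pow]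

lemma qf_le {l h t u : ℝ} (hlh : l ≤ h) (htu : t ≤ u) (g : C(Rc l h t u, ℂ)) {B : ℝ} (hB : ∀ x, ‖g x‖ ^ 2 ≤ B) :
    qf l h t u g ≤ B * (2 * (h - l) + 2 * (u - t)) := by
  rw [← bI_const]
  refine bI_mono hlh htu (qf_cont _) continuousOn_const fun z hz ↦ ?_
  rw [extC_apply _ hz.1]; exact hB _

lemma qf_nonneg {l h t u : ℝ} (hlh : l ≤ h) (htu : t ≤ u) (g : C(Rc l h t u, ℂ)) : 0 ≤ qf l h t u g := by
  have : bI (fun _ ↦ 0) l h t u = 0 := by rw [bI_const]; ring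
  rw [← this]
  exact bI_mono hlh htu continuousOn_const (qf_cont _) fun z hz ↦ by positivity

lemma qf_control {l h t u : ℝ} (hlh : l ≤ h) (htu : t ≤ u) {K : Set ℂ} (hK : IsCompact K) (hKR : K ⊆ Ro l h t u) {ε : ℝ} (hε : 0 < ε) :
    ∃ κ > 0, ∀ G : ℂ → ℂ, Differentiable ℂ G → qf l h t u (mkC _ G) ≤ κ → ∀ s ∈ K, ‖G s‖ ≤ ε := by
  obtain ⟨d, hd, hdK⟩ := hK.exists_thickening_subset_open (Ro_open l h t u) hKR
  have hdist : ∀ s ∈ K, ∀ z ∈ Bd l h t u, d ≤ ‖z - s‖ := by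
    intro s hs z hz
    by_contra hc
    refine hz.2 (hdK ?_)
    rw [Metric.mem_thickening_iff]
    exact ⟨s, hs, by rw [dist_eq_norm]; exact not_le.mp hc⟩
  set P : ℝ := 2 * (h - l) + 2 * (u - t) with hP
  have hP0 : 0 ≤ P := by rw [hP]; linarith
  set η : ℝ := ε * d / (P + 1) with hη
  have hη0 : 0 < η := by positivity
  refine ⟨η * (ε * d), by positivity, fun G hG hq s hs ↦ ?_⟩
  have hc := cauchy_rect isOpen_univ hG.differentiableOn (Set.subset_univ (Rc l h t u)) (hKR hs)
  have hb := rectInt_le_bI hlh htu (fun z ↦ G z * (z - s)⁻¹)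
  rw [hc] at hb
  have hGc : ContinuousOn G (Bd l h t u) := hG.continuous.continuousOn
  have hne : ∀ z ∈ Bd l h t u, z - s ≠ 0 := fun z hz h0 ↦ by
    have := hdist s hs z hz; rw [h0, norm_zero] at this; linarith
  have hcont : ContinuousOn (fun z ↦ G z * (z - s)⁻¹) (Bd l h t u) :=
    hGc.mul (ContinuousOn.inv₀ (by fun_prop) hne)
  have hc2 : ContinuousOn (fun z ↦ ‖G z‖ ^ 2) (Bd l h t u) := hGc.norm.pow 2
  have hqe : qf l h t u (mkC _ G) = bI (fun z ↦ ‖G z‖ ^ 2) l h t u := by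
    refine bI_congr hlh htu (qf_cont _) fun z hz ↦ ?_
    rw [extC_apply _ hz.1, mkC_apply hG.continuous.continuousOn]
  have hle : bI (fun z ↦ ‖G z * (z - s)⁻¹‖) l h t u ≤
      bI (fun z ↦ η / (2 * d) + 1 / (2 * d * η) * ‖G z‖ ^ 2) l h t u := by
    refine bI_mono hlh htu hcont.norm (continuousOn_const.add (continuousOn_const.mul hc2)) fun z hz ↦ ?_
    rw [norm_mul, norm_inv]
    have h1 := hdist s hs z hz
    calc ‖G z‖ * ‖z - s‖⁻¹ ≤ ‖G z‖ * d⁻¹ := by gcongr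
      _ ≤ _ := by
        have : η / (2 * d) + 1 / (2 * d * η) * ‖G z‖ ^ 2 - ‖G z‖ * d⁻¹ = (η - ‖G z‖) ^ 2 / (2 * d * η) := by
          field_simp; ring
        have h2 : 0 ≤ (η - ‖G z‖) ^ 2 / (2 * d * η) := by positivity
        linarith
  rw [bI_add hlh htu (f := fun _ ↦ η / (2 * d)) (g := fun z ↦ 1 / (2 * d * η) * ‖G z‖ ^ 2)
    continuousOn_const (continuousOn_const.mul hc2), bI_const, bI_const_mul, ← hqe] at hle
  have h3 : 1 / (2 * d * η) * qf l h t u (mkC _ G) ≤ 1 / (2 * d * η) * (η * (ε * d)) := by gcongr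
  have h4 : 1 / (2 * d * η) * (η * (ε * d)) = ε / 2 := by field_simp
  have h5 : η / (2 * d) * P ≤ ε / 2 := by
    have : η / (2 * d) * P = ε / 2 * (P / (P + 1)) := by rw [hη]; field_simp
    rw [this]
    have : P / (P + 1) ≤ 1 := by rw [div_le_one (by linarith)]; linarith
    nlinarith
  have h6 : ‖(2 * Real.pi * I * G s : ℂ)‖ = 2 * Real.pi * ‖G s‖ := by
    simp [abs_of_pos Real.pi_pos]
  rw [h6] at hb
  have h7 := Real.pi_gt_three
  nlinarith [norm_nonneg (G s)]

end
end PD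

open Complex Filter
namespace PD

noncomputable def Gn (m n : ℕ) (s : ℂ) : ℂ := (n : ℂ) ^ (-s) / (((Real.log n) ^ m : ℝ) : ℂ)

noncomputable def X (m p : ℕ) (s : ℂ) : ℂ := if p.Prime then Gn m p s else 0

noncomputable def Tm (m p : ℕ) (w s : ℂ) : ℂ :=
  if p.Prime then polylog m ((p : ℂ) ^ (-s) * w) / (((Real.log p) ^ m : ℝ) : ℂ) else 0

lemma log_ge {n : ℕ} (hn : 2 ≤ n) : Real.log 2 ≤ Real.log n :=
  Real.log_le_log (by norm_num) (by exact_mod_cast hn)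

lemma cpow_norm_le {n : ℕ} (hn : 2 ≤ n) {σ : ℝ} {s : ℂ} (hs : σ ≤ s.re) :
    ‖(n : ℂ) ^ (-s)‖ ≤ (n : ℝ) ^ (-σ) := by
  rw [norm_natCast_cpow_of_pos (by omega)]
  exact Real.rpow_le_rpow_of_exponent_le (by exact_mod_cast (by omega : 1 ≤ n)) (by simpa using hs)

lemma loginv_norm_le (m : ℕ) {n : ℕ} (hn : 2 ≤ n) :
    ‖((((Real.log n) ^ m : ℝ) : ℂ))⁻¹‖ ≤ ((Real.log 2) ^ m)⁻¹ := by
  have h2 : 0 < Real.log 2 := Real.log_pos (by norm_num)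
  have h3 := log_ge hn
  rw [norm_inv, norm_real, Real.norm_of_nonneg (by positivity)]
  gcongr

lemma Gn_norm (m : ℕ) {n : ℕ} (hn : 2 ≤ n) {σ : ℝ} {s : ℂ} (hs : σ ≤ s.re) :
    ‖Gn m n s‖ ≤ ((Real.log 2) ^ m)⁻¹ * (n : ℝ) ^ (-σ) := by
  rw [Gn, div_eq_mul_inv, norm_mul, mul_comm]
  have h2 : 0 < Real.log 2 := Real.log_pos (by norm_num)
  exact mul_le_mul (loginv_norm_le m hn) (cpow_norm_le hn hs) (norm_nonneg _) (by positivity)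

lemma inv_pow_lip {c : ℝ} (hc : 0 < c) (m : ℕ) :
    ∃ C, 0 ≤ C ∧ ∀ A B : ℝ, c ≤ A → c ≤ B → |(B ^ m)⁻¹ - (A ^ m)⁻¹| ≤ C * |B - A| := by
  induction m with
  | zero => exact ⟨0, le_rfl, by simp⟩
  | succ m ih =>
    obtain ⟨C, hC, h⟩ := ih
    refine ⟨c⁻¹ * C + (c ^ m)⁻¹ * (c⁻¹ * c⁻¹), by positivity, fun A B hA hB ↦ ?_⟩
    have hA0 : 0 < A := hc.trans_le hA
    have hB0 : 0 < B := hc.trans_le hB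
    have e : (B ^ (m + 1))⁻¹ - (A ^ (m + 1))⁻¹ =
        B⁻¹ * ((B ^ m)⁻¹ - (A ^ m)⁻¹) - (A ^ m)⁻¹ * ((B⁻¹ * A⁻¹) * (B - A)) := by
      field_simp; ring
    rw [e]
    refine (abs_sub _ _).trans ?_
    rw [abs_mul, abs_mul, abs_mul, abs_of_pos (inv_pos.mpr hB0), abs_of_pos (by positivity : 0 < (A ^ m)⁻¹),
      abs_of_pos (by positivity : 0 < B⁻¹ * A⁻¹), add_mul]
    refine add_le_add ?_ ?_
    · rw [mul_assoc]
      exact mul_le_mul (by gcongr) (h A B hA hB) (abs_nonneg _) (by positivity)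
    · rw [← mul_assoc]; gcongr

lemma cpow_diff {n : ℕ} (hn : 2 ≤ n) {σ : ℝ} {s : ℂ} (hσ : 0 < σ) (hs : σ ≤ s.re) :
    ‖((n + 1 : ℕ) : ℂ) ^ (-s) - (n : ℂ) ^ (-s)‖ ≤ ‖s‖ * (n : ℝ) ^ (-(σ + 1)) := by
  have hs0 : s ≠ 0 := by rintro rfl; simp at hs; linarith
  have hn0 : (0 : ℝ) < n := by exact_mod_cast (by omega : 0 < n)
  have hn1 : (1 : ℝ) ≤ n := by exact_mod_cast (by omega : 1 ≤ n)
  have hd : ∀ x ∈ Set.Icc (n : ℝ) (n + 1), HasDerivWithinAt (fun y : ℝ ↦ (y : ℂ) ^ (-s))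
      (-s * (x : ℂ) ^ (-s - 1)) (Set.Icc (n : ℝ) (n + 1)) x := by
    intro x hx
    have hx0 : x ≠ 0 := by linarith [hx.1]
    exact (hasDerivAt_ofReal_cpow_const hx0 (neg_ne_zero.mpr hs0)).hasDerivWithinAt
  have hbd : ∀ x ∈ Set.Icc (n : ℝ) (n + 1), ‖-s * (x : ℂ) ^ (-s - 1)‖ ≤ ‖s‖ * (n : ℝ) ^ (-(σ + 1)) := by
    intro x hx
    rw [norm_mul, norm_neg, norm_cpow_eq_rpow_re_of_pos (by linarith [hx.1])]
    gcongr
    calc x ^ (-s - 1).re ≤ x ^ (-(σ + 1)) :=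
          Real.rpow_le_rpow_of_exponent_le (by linarith [hx.1]) (by simp; linarith)
      _ ≤ _ := Real.rpow_le_rpow_of_nonpos hn0 hx.1 (by linarith)
  have := Convex.norm_image_sub_le_of_norm_hasDerivWithin_le hd hbd (convex_Icc _ _)
    (Set.left_mem_Icc.mpr (by linarith)) (Set.right_mem_Icc.mpr (by linarith))
  rw [add_sub_cancel_left, norm_one, mul_one] at this
  push_cast at this ⊢
  exact this

lemma Gn_diff (m : ℕ) {σ B : ℝ} (hσ : 0 < σ) : ∃ C, 0 ≤ C ∧ ∀ n : ℕ, 2 ≤ n → ∀ s : ℂ, σ ≤ s.re → ‖s‖ ≤ B →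
    ‖Gn m (n + 1) s - Gn m n s‖ ≤ C * (n : ℝ) ^ (-(σ + 1)) := by
  have h2 : 0 < Real.log 2 := Real.log_pos (by norm_num)
  obtain ⟨C, hC, hlip⟩ := inv_pow_lip h2 m
  refine ⟨|B| * ((Real.log 2) ^ m)⁻¹ + C, by positivity, fun n hn s hs hsB ↦ ?_⟩
  have hn0 : (0 : ℝ) < n := by exact_mod_cast (by omega : 0 < n)
  have e : Gn m (n + 1) s - Gn m n s =
      (((n + 1 : ℕ) : ℂ) ^ (-s) - (n : ℂ) ^ (-s)) * ((((Real.log (n + 1 : ℕ)) ^ m : ℝ) : ℂ))⁻¹ +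
      (n : ℂ) ^ (-s) * (((((Real.log (n + 1 : ℕ)) ^ m)⁻¹ - ((Real.log n) ^ m)⁻¹ : ℝ)) : ℂ) := by
    unfold Gn; push_cast; ring
  have hl : |Real.log (n + 1 : ℕ) - Real.log n| ≤ (n : ℝ)⁻¹ := by
    rw [← Real.log_div (by positivity) (by positivity), abs_of_nonneg (Real.log_nonneg _)]
    · refine (Real.log_le_sub_one_of_pos (by positivity)).trans (le_of_eq ?_)
      push_cast; field_simp; ring
    · rw [one_le_div hn0]; push_cast; linarith
  rw [e, add_mul]
  refine (norm_add_le _ _).trans (add_le_add ?_ ?_)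
  · rw [norm_mul]
    calc _ ≤ (|B| * (n : ℝ) ^ (-(σ + 1))) * ((Real.log 2) ^ m)⁻¹ := by
          refine mul_le_mul ((cpow_diff hn hσ hs).trans ?_) (loginv_norm_le m (by omega)) (norm_nonneg _)
            (by positivity)
          gcongr; exact hsB.trans (le_abs_self B)
      _ = _ := by ring
  · rw [norm_mul, norm_real, Real.norm_eq_abs]
    calc _ ≤ (n : ℝ) ^ (-σ) * (C * (n : ℝ)⁻¹) := by
          refine mul_le_mul (cpow_norm_le hn hs) ?_ (abs_nonneg _) (by positivity)
          exact (hlip _ _ (log_ge hn) (log_ge (by omega))).trans (by gcongr)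
      _ = C * ((n : ℝ) ^ (-σ) * (n : ℝ) ^ (-1 : ℝ)) := by rw [Real.rpow_neg_one]; ring
      _ = _ := by rw [← Real.rpow_add hn0]; ring_nf

lemma polylog_term_le (m k : ℕ) (z : ℂ) : ‖z ^ (k + 1) / ((k : ℂ) + 1) ^ (m + 1)‖ ≤ ‖z‖ ^ (k + 1) := by
  rw [norm_div, norm_pow, norm_pow]
  refine div_le_self (by positivity) (one_le_pow₀ ?_)
  have : ((k : ℂ) + 1) = ((k + 1 : ℕ) : ℂ) := by push_cast; rfl
  rw [this, Complex.norm_natCast]; exact_mod_cast (by omega)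

lemma polylog_summable (m : ℕ) {z : ℂ} (hz : ‖z‖ < 1) :
    Summable fun k : ℕ ↦ z ^ (k + 1) / ((k : ℂ) + 1) ^ (m + 1) := by
  refine Summable.of_norm_bounded (g := fun k ↦ ‖z‖ ^ (k + 1)) ?_ fun k ↦ polylog_term_le m k z
  exact (summable_nat_add_iff 1).mpr (summable_geometric_of_lt_one (norm_nonneg _) hz)

lemma polylog_sub (m : ℕ) {z : ℂ} (hz : ‖z‖ < 1) : ‖polylog m z - z‖ ≤ ‖z‖ ^ 2 * (1 - ‖z‖)⁻¹ := by
  have hs := polylog_summable m hz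
  rw [polylog, hs.tsum_eq_zero_add]
  simp only [Nat.cast_zero, zero_add, one_pow, div_one, pow_one, add_sub_cancel_left]
  have hg := (hasSum_geometric_of_lt_one (norm_nonneg z) hz).mul_left (‖z‖ ^ 2)
  refine tsum_of_norm_bounded hg fun k ↦ ?_
  have := polylog_term_le m (k + 1) z
  refine this.trans (le_of_eq ?_); ring

lemma polylog_diff (m : ℕ) : DifferentiableOn ℂ (polylog m) (Metric.ball 0 1) := by
  intro z hz
  rw [mem_ball_zero_iff] at hz
  obtain ⟨r, hr1, hr2⟩ := exists_between hz
  have hr0 : 0 ≤ r := (norm_nonneg z).trans hr1.le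
  have : DifferentiableOn ℂ (polylog m) (Metric.ball 0 r) := by
    unfold polylog
    refine differentiableOn_tsum_of_summable_norm (u := fun k ↦ r ^ (k + 1))
      ((summable_nat_add_iff 1).mpr (summable_geometric_of_lt_one hr0 hr2))
      (fun k ↦ by fun_prop) Metric.isOpen_ball fun k w hw ↦ ?_
    rw [mem_ball_zero_iff] at hw
    refine (polylog_term_le m k w).trans (by gcongr)
  exact (this.differentiableAt (Metric.isOpen_ball.mem_nhds (by simpa using hr1))).differentiableWithinAt

lemma rpow_half {p : ℕ} (hp : 2 ≤ p) {σ : ℝ} (hσ : 1 / 2 < σ) : (p : ℝ) ^ (-σ) ≤ 3 / 4 := by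
  have hp' : (2 : ℝ) ≤ p := by exact_mod_cast hp
  have h1 : (p : ℝ) ^ (-σ) ≤ (2 : ℝ) ^ (-σ) := Real.rpow_le_rpow_of_nonpos (by norm_num) hp' (by linarith)
  have h2 : (2 : ℝ) ^ (-σ) ≤ (2 : ℝ) ^ (-(1 / 2) : ℝ) :=
    Real.rpow_le_rpow_of_exponent_le (by norm_num) (by linarith)
  have h3 : ((2 : ℝ) ^ (-(1 / 2) : ℝ)) ^ 2 = 1 / 2 := by
    rw [← Real.rpow_natCast, ← Real.rpow_mul (by norm_num)]; norm_num [Real.rpow_neg_one]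
  have h4 : 0 ≤ (2 : ℝ) ^ (-(1 / 2) : ℝ) := by positivity
  nlinarith

lemma Tm_sub (m p : ℕ) {σ : ℝ} (hσ : 1 / 2 < σ) {s w : ℂ} (hs : σ ≤ s.re) (hw : ‖w‖ = 1) :
    ‖Tm m p w s - w * X m p s‖ ≤ (4 * ((Real.log 2) ^ m)⁻¹) * (p : ℝ) ^ (-(2 * σ)) := by
  have h2 : 0 < Real.log 2 := Real.log_pos (by norm_num)
  unfold Tm X
  split_ifs with hp
  · have hp2 := hp.two_le
    set z : ℂ := (p : ℂ) ^ (-s) * w with hz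
    have hzn : ‖z‖ ≤ (p : ℝ) ^ (-σ) := by
      rw [hz, norm_mul, hw, mul_one]; exact cpow_norm_le hp2 hs
    have hz34 : ‖z‖ ≤ 3 / 4 := hzn.trans (rpow_half hp2 hσ)
    have e : polylog m z / (((Real.log p) ^ m : ℝ) : ℂ) - w * Gn m p s =
        (polylog m z - z) * ((((Real.log p) ^ m : ℝ) : ℂ))⁻¹ := by
      rw [hz, Gn]; ring
    rw [e, norm_mul]
    have h4 : (1 - ‖z‖)⁻¹ ≤ 4 := by
      rw [inv_le_comm₀ (by linarith) (by norm_num)]; linarith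
    have h5 : ‖polylog m z - z‖ ≤ 4 * (p : ℝ) ^ (-(2 * σ)) := by
      refine (polylog_sub m (by linarith)).trans ?_
      have h6 : (p : ℝ) ^ (-(2 * σ)) = ((p : ℝ) ^ (-σ)) ^ 2 := by
        rw [← Real.rpow_natCast, ← Real.rpow_mul (by positivity)]; congr 1; push_cast; ring
      rw [h6, mul_comm]
      gcongr
    calc _ ≤ (4 * (p : ℝ) ^ (-(2 * σ))) * ((Real.log 2) ^ m)⁻¹ :=
          mul_le_mul h5 (loginv_norm_le m hp2) (norm_nonneg _) (by positivity)
      _ = _ := by ring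
  · simp; positivity

lemma Tm_diff (m p : ℕ) {U : Set ℂ} (hU : ∀ s ∈ U, 1 / 2 < s.re) : DifferentiableOn ℂ (Tm m p 1) U := by
  unfold Tm
  by_cases hp : p.Prime
  · simp only [hp, if_true, mul_one]
    have hp0 : (p : ℂ) ≠ 0 := by exact_mod_cast hp.ne_zero
    refine DifferentiableOn.div_const ?_ _
    refine (polylog_diff m).comp (fun s _ ↦
      (DifferentiableAt.const_cpow (by fun_prop) (Or.inl hp0)).differentiableWithinAt) fun s hs ↦ ?_
    rw [mem_ball_zero_iff]
    have := (cpow_norm_le hp.two_le le_rfl).trans (rpow_half hp.two_le (hU s hs))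
    linarith
  · simp only [hp, if_false]; fun_prop

lemma X_diff (m p : ℕ) : Differentiable ℂ (X m p) := by
  unfold X
  by_cases hp : p.Prime
  · simp only [hp, if_true, Gn]
    have hp0 : (p : ℂ) ≠ 0 := by exact_mod_cast hp.ne_zero
    refine Differentiable.div_const (fun s ↦ DifferentiableAt.const_cpow (by fun_prop) (Or.inl hp0)) _
  · simp only [hp, if_false]; fun_prop

end PD

open Complex Filter
namespace PD

noncomputable def eS (k : ℕ) : ℂ := (-1) ^ (Nat.primeCounting' k)

lemma eS_norm (k : ℕ) : ‖eS k‖ = 1 := by simp [eS]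

lemma eS_succ (k : ℕ) : eS (k + 1) = if k.Prime then - eS k else eS k := by
  unfold eS Nat.primeCounting'
  rw [Nat.count_succ]
  split_ifs with h
  · rw [pow_succ]; ring
  · simp

noncomputable def ES (N1 n : ℕ) : ℂ := ∑ k ∈ Finset.Ico N1 n, if k.Prime then eS k else 0

lemma ES_eq {N1 n : ℕ} (h : N1 ≤ n) : ES N1 n = (eS N1 - eS n) / 2 := by
  induction n, h using Nat.le_induction with
  | base => simp [ES]
  | succ n hn ih =>
    rw [ES, Finset.sum_Ico_succ_top hn, ← ES, ih, eS_succ]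
    split_ifs <;> ring

lemma ES_norm {N1 n : ℕ} (h : N1 ≤ n) : ‖ES N1 n‖ ≤ 1 := by
  rw [ES_eq h, norm_div]
  have := norm_sub_le (eS N1) (eS n)
  rw [eS_norm, eS_norm] at this
  rw [div_le_one (by simp)]
  simpa [one_add_one_eq_two] using this

noncomputable def DD (m N1 k : ℕ) (s : ℂ) : ℂ :=
  if N1 ≤ k then ES N1 (k + 1) * (Gn m (k + 1) s - Gn m k s) else 0

lemma abel (m : ℕ) {N1 n : ℕ} (h : N1 ≤ n) (s : ℂ) :
    ∑ k ∈ Finset.Ico N1 n, eS k * X m k s = ES N1 n * Gn m n s - ∑ k ∈ Finset.range n, DD m N1 k s := by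
  induction n, h using Nat.le_induction with
  | base =>
    have : ∑ k ∈ Finset.range N1, DD m N1 k s = 0 := by
      refine Finset.sum_eq_zero fun k hk ↦ ?_
      rw [Finset.mem_range] at hk
      rw [DD, if_neg (by omega)]
    simp [ES, this]
  | succ n hn ih =>
    have h1 : ES N1 (n + 1) = ES N1 n + if n.Prime then eS n else 0 := by
      rw [ES, Finset.sum_Ico_succ_top hn, ← ES]
    rw [Finset.sum_Ico_succ_top hn, ih, Finset.sum_range_succ, DD, if_pos hn, X, h1]
    split_ifs <;> ring

lemma tail_series (m : ℕ) {R : Set ℂ} {β γ : ℕ → ℝ} (hβ : Summable β) (hβ0 : ∀ n, 0 ≤ β n)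
    (hγ : Tendsto γ atTop (nhds 0)) (hG : ∀ n, 2 ≤ n → ∀ s ∈ R, ‖Gn m n s‖ ≤ γ n)
    (hD : ∀ n, 2 ≤ n → ∀ s ∈ R, ‖Gn m (n + 1) s - Gn m n s‖ ≤ β n) {N0 N1 : ℕ} (h2 : 2 ≤ N0)
    (h01 : N0 ≤ N1) :
    TendstoUniformlyOn (fun n s ↦ ∑ k ∈ Finset.Ico N1 n, eS k * X m k s) (fun s ↦ - ∑' k, DD m N1 k s)
      atTop R ∧ ∀ s ∈ R, ‖- ∑' k, DD m N1 k s‖ ≤ ∑' k, β (k + N0) := by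
  have hDb : ∀ k, ∀ s ∈ R, ‖DD m N1 k s‖ ≤ β k := by
    intro k s hs
    rw [DD]; split_ifs with hk
    · rw [norm_mul]
      calc _ ≤ 1 * β k := mul_le_mul (ES_norm (by omega)) (hD k (by omega) s hs) (norm_nonneg _) zero_le_one
        _ = _ := one_mul _
    · simpa using hβ0 k
  constructor
  · have h1 : TendstoUniformlyOn (fun n s ↦ ∑ k ∈ Finset.range n, DD m N1 k s) (fun s ↦ ∑' k, DD m N1 k s)
        atTop R := tendstoUniformlyOn_tsum_nat hβ fun n s hs ↦ hDb n s hs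
    have h3 : TendstoUniformlyOn (fun n s ↦ ES N1 n * Gn m n s) (fun _ ↦ 0) atTop R := by
      rw [Metric.tendstoUniformlyOn_iff]
      intro ε hε
      filter_upwards [hγ.eventually (gt_mem_nhds hε), eventually_ge_atTop N1] with n hn hn1 s hs
      rw [dist_zero_left, norm_mul]
      have := hG n (by omega) s hs
      have h4 := ES_norm hn1
      calc _ ≤ 1 * γ n := mul_le_mul h4 this (norm_nonneg _) zero_le_one
        _ < ε := by rwa [one_mul]
    have h5 := h3.sub h1
    have h6 : TendstoUniformlyOn (fun n s ↦ ∑ k ∈ Finset.Ico N1 n, eS k * X m k s)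
        ((fun _ ↦ 0) - fun s ↦ ∑' k, DD m N1 k s) atTop R := by
      refine h5.congr ?_
      filter_upwards [eventually_ge_atTop N1] with n hn s hs
      exact (abel m hn s).symm
    refine h6.congr_right fun s _ ↦ by simp
  · intro s hs
    rw [norm_neg]
    have hsm : Summable fun k ↦ DD m N1 k s := Summable.of_norm_bounded hβ fun k ↦ hDb k s hs
    rw [← hsm.sum_add_tsum_nat_add N0]
    have h0 : ∑ k ∈ Finset.range N0, DD m N1 k s = 0 := by
      refine Finset.sum_eq_zero fun k hk ↦ ?_
      rw [Finset.mem_range] at hk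
      rw [DD, if_neg (by omega)]
    rw [h0, zero_add]
    exact tsum_of_norm_bounded ((summable_nat_add_iff N0).mpr hβ).hasSum fun k ↦ hDb _ s hs

lemma majorants (m : ℕ) {σ B : ℝ} (hσ : 1 / 2 < σ) {R : Set ℂ} (hR : ∀ s ∈ R, σ ≤ s.re ∧ ‖s‖ ≤ B) :
    ∃ β γ : ℕ → ℝ, Summable β ∧ (∀ n, 0 ≤ β n) ∧ Tendsto γ atTop (nhds 0) ∧
      (∀ n, 2 ≤ n → ∀ s ∈ R, ‖Gn m n s‖ ≤ γ n) ∧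
      (∀ n, 2 ≤ n → ∀ s ∈ R, ‖Gn m (n + 1) s - Gn m n s‖ ≤ β n) ∧
      (∀ n, ∀ s ∈ R, ‖X m n s‖ ^ 2 ≤ β n) ∧
      (∀ n, ∀ s ∈ R, ∀ w : ℂ, ‖w‖ = 1 → ‖Tm m n w s - w * X m n s‖ ≤ β n) := by
  have h2 : 0 < Real.log 2 := Real.log_pos (by norm_num)
  obtain ⟨C, hC, hCd⟩ := Gn_diff m (σ := σ) (B := B) (by linarith)
  set c0 : ℝ := ((Real.log 2) ^ m)⁻¹ with hc0
  have hc0p : 0 < c0 := by positivity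
  have hs1 : Summable fun n : ℕ ↦ (n : ℝ) ^ (-(2 * σ)) := Real.summable_nat_rpow.mpr (by linarith)
  have hs2 : Summable fun n : ℕ ↦ (n : ℝ) ^ (-(σ + 1)) := Real.summable_nat_rpow.mpr (by linarith)
  refine ⟨fun n ↦ (4 * c0 + c0 ^ 2) * (n : ℝ) ^ (-(2 * σ)) + C * (n : ℝ) ^ (-(σ + 1)),
    fun n ↦ c0 * (n : ℝ) ^ (-σ), (hs1.mul_left _).add (hs2.mul_left _), fun n ↦ by positivity, ?_,
    fun n hn s hs ↦ Gn_norm m hn (hR s hs).1, ?_, ?_, ?_⟩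
  · have := (tendsto_rpow_neg_atTop (by linarith : 0 < σ)).comp tendsto_natCast_atTop_atTop
    simpa using this.const_mul c0
  · intro n hn s hs
    have := hCd n hn s (hR s hs).1 (hR s hs).2
    have h3 : 0 ≤ (4 * c0 + c0 ^ 2) * (n : ℝ) ^ (-(2 * σ)) := by positivity
    linarith
  · intro n s hs
    have h3 : 0 ≤ 4 * c0 * (n : ℝ) ^ (-(2 * σ)) + C * (n : ℝ) ^ (-(σ + 1)) := by positivity
    have h4 : 0 ≤ c0 ^ 2 * (n : ℝ) ^ (-(2 * σ)) := by positivity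
    have h6 : (n : ℝ) ^ (-(2 * σ)) = ((n : ℝ) ^ (-σ)) ^ 2 := by
      rw [← Real.rpow_natCast, ← Real.rpow_mul (by positivity)]; congr 1; push_cast; ring
    have h5 : ‖X m n s‖ ^ 2 ≤ c0 ^ 2 * (n : ℝ) ^ (-(2 * σ)) := by
      rw [X]; split_ifs with hp
      · rw [h6, ← mul_pow]
        gcongr
        exact Gn_norm m hp.two_le (hR s hs).1
      · simpa using h4
    linarith
  · intro n s hs w hw
    have := Tm_sub m n hσ (hR s hs).1 hw
    have h3 : 0 ≤ c0 ^ 2 * (n : ℝ) ^ (-(2 * σ)) + C * (n : ℝ) ^ (-(σ + 1)) := by positivity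
    rw [← hc0] at this
    linarith

lemma rect_around {a b y₁ y₂ : ℝ} (hab : a < b) (hy : y₁ < y₂) {K : Set ℂ} (hK : IsCompact K)
    (hKR : K ⊆ Ro a b y₁ y₂) : ∃ l h t u, a < l ∧ l ≤ h ∧ h < b ∧ y₁ < t ∧ t ≤ u ∧ u < y₂ ∧
      K ⊆ Ro l h t u := by
  obtain ⟨d, hd, hdK⟩ := hK.exists_thickening_subset_open (Ro_open a b y₁ y₂) hKR
  have hmem : ∀ s ∈ K, ∀ v : ℂ, ‖v‖ < d → s + v ∈ Ro a b y₁ y₂ := fun s hs v hv ↦ hdK (by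
    rw [Metric.mem_thickening_iff]; exact ⟨s, hs, by simpa using hv⟩)
  have hm : 0 < min (d / 2) (min ((b - a) / 4) ((y₂ - y₁) / 4)) := by
    simp only [lt_min_iff]; refine ⟨?_, ?_, ?_⟩ <;> linarith
  obtain ⟨e, he⟩ : ∃ e, e = min (d / 2) (min ((b - a) / 4) ((y₂ - y₁) / 4)) := ⟨_, rfl⟩
  rw [← he] at hm
  have h1 : e ≤ d / 2 := he ▸ min_le_left _ _
  have h2 : e ≤ (b - a) / 4 := he ▸ (min_le_right _ _).trans (min_le_left _ _)
  have h3 : e ≤ (y₂ - y₁) / 4 := he ▸ (min_le_right _ _).trans (min_le_right _ _)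
  refine ⟨a + e, b - e, y₁ + e, y₂ - e, by linarith, by linarith, by linarith, by linarith, by linarith,
    by linarith, fun s hs ↦ ?_⟩
  have habs : |e| < d := by rw [abs_of_pos hm]; linarith
  have k1 := hmem s hs (-(e : ℂ)) (by rw [norm_neg, norm_real, Real.norm_eq_abs]; exact habs)
  have k2 := hmem s hs (e : ℂ) (by rw [norm_real, Real.norm_eq_abs]; exact habs)
  have k3 := hmem s hs (-(e * I : ℂ)) (by rw [norm_neg, norm_mul, norm_I, mul_one, norm_real, Real.norm_eq_abs]; exact habs)
  have k4 := hmem s hs (e * I : ℂ) (by rw [norm_mul, norm_I, mul_one, norm_real, Real.norm_eq_abs]; exact habs)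
  have j1 := k1.1
  have j2 := k2.2.1
  have j3 := k3.2.2.1
  have j4 := k4.2.2.2
  simp at j1 j2 j3 j4
  exact ⟨by linarith, by linarith, by linarith, by linarith⟩

end PD

open Complex Filter
namespace PD

lemma mkC_sum {Q : Set ℂ} (S : Finset ℕ) (c : ℕ → ℂ) (f : ℕ → ℂ → ℂ) (hf : ∀ n, ContinuousOn (f n) Q) :
    ∑ n ∈ S, c n • mkC Q (f n) = mkC Q (fun s ↦ ∑ n ∈ S, c n * f n s) := by
  ext x
  have hc : ContinuousOn (fun s ↦ ∑ n ∈ S, c n * f n s) Q :=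
    continuousOn_finsetSum _ fun n _ ↦ continuousOn_const.mul (hf n)
  rw [mkC_apply hc, ContinuousMap.coe_sum, Finset.sum_apply]
  refine Finset.sum_congr rfl fun n _ ↦ ?_
  rw [ContinuousMap.smul_apply, mkC_apply (hf n), smul_eq_mul]

lemma norm_phi_X {Q : Set ℂ} (m p : ℕ) (Φ : C(Q, ℂ) →L[ℂ] ℂ) :
    ‖Φ (mkC Q (X m p))‖ = if p.Prime then ‖ev Φ p‖ / (Real.log p) ^ m else 0 := by
  by_cases hp : p.Prime
  · have e : X m p = fun s ↦ (((Real.log p) ^ m : ℝ) : ℂ)⁻¹ * (p : ℂ) ^ (-s) := by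
      ext s; rw [X, if_pos hp, Gn, div_eq_inv_mul]
    have h0 : 0 ≤ Real.log p := Real.log_natCast_nonneg p
    rw [if_pos hp, e, mkC_const_mul _ (cpow_cont hp.ne_zero).continuousOn, map_smul, norm_smul, norm_inv,
      norm_real, Real.norm_of_nonneg (by positivity), ev, div_eq_inv_mul]
  · have e : mkC Q (X m p) = 0 := by
      ext x
      rw [mkC_apply (X_diff m p).continuous.continuousOn, X, if_neg hp]; rfl
    rw [e, if_neg hp]; simp

/-- Finite approximation with unimodular coefficients. -/
lemma finite_approx (m : ℕ) {a b y₁ y₂ l h t u κ P T δ : ℝ} (ha : 1 / 2 < a) (hb1 : b < 1)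
    (h1 : a < l) (h2 : l ≤ h) (h3 : h < b) (h4 : y₁ < t) (h5 : t ≤ u) (h6 : u < y₂) {K : Set ℂ}
    (hKR : K ⊆ Ro l h t u) (hP : P = 2 * (h - l) + 2 * (u - t))
    (hκ : ∀ G : ℂ → ℂ, Differentiable ℂ G → qf l h t u (mkC _ G) ≤ κ → ∀ s ∈ K, ‖G s‖ ≤ δ)
    (hδ : 0 < δ) {β : ℕ → ℝ} (hX : ∀ n, ∀ s ∈ Ro a b y₁ y₂, ‖X m n s‖ ^ 2 ≤ β n) {N0 : ℕ}
    (hT : ∀ N1, ∑ n ∈ Finset.Ico N0 N1, β n ≤ T) (hTκ : T * P ≤ κ)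
    {F : ℂ → ℂ} (hF : DifferentiableOn ℂ F (Ro a b y₁ y₂)) :
    ∃ N1, N0 ≤ N1 ∧ ∃ w : ℕ → ℂ, (∀ n, ‖w n‖ = 1) ∧
      ∀ s ∈ K, ‖F s - ∑ n ∈ Finset.Ico N0 N1, w n * X m n s‖ ≤ δ + δ := by
  haveI : CompactSpace (Rc l h t u) := isCompact_iff_compactSpace.mp (Rc_compact l h t u)
  have hsub : Rc l h t u ⊆ Ro a b y₁ y₂ := fun z hz ↦
    ⟨h1.trans_le hz.1, hz.2.1.trans_lt h3, h4.trans_le hz.2.2.1, hz.2.2.2.trans_lt h6⟩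
  have hXc : ∀ n, ContinuousOn (X m n) (Rc l h t u) := fun n ↦ (X_diff m n).continuous.continuousOn
  obtain ⟨N1, hN, α, hα, hd⟩ := dense_abs (fun p ↦ mkC (Rc l h t u) (X m p)) (mkC (Rc l h t u) F)
    (fun Φ hs ↦ annih ha hb1 m h1 h2 h3 h4 h5 h6 Φ (by simpa only [norm_phi_X] using hs) hF) N0 hδ
  obtain ⟨w, hw, hq⟩ := rounding (qf l h t u) (qf_par h2 h5) (qf_smul h2 h5) (qf_nonneg h2 h5)
    (fun p ↦ mkC (Rc l h t u) (X m p)) α hα (Finset.Ico N0 N1)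
  refine ⟨N1, hN, w, hw, fun s hs ↦ ?_⟩
  have hP0 : 0 ≤ P := by rw [hP]; linarith
  have hq2 : qf l h t u (mkC _ (fun s ↦ ∑ n ∈ Finset.Ico N0 N1, (α n - w n) * X m n s)) ≤ κ := by
    rw [← mkC_sum _ _ _ hXc]
    refine hq.trans ?_
    refine le_trans ?_ hTκ
    refine le_trans ?_ (mul_le_mul_of_nonneg_right (hT N1) hP0)
    rw [Finset.sum_mul]
    refine Finset.sum_le_sum fun n _ ↦ ?_
    rw [hP]
    refine qf_le h2 h5 _ fun x ↦ ?_
    rw [mkC_apply (hXc n)]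
    exact hX n _ (hsub x.2)
  have e1 := hκ _ (by
    have := fun n ↦ X_diff m n
    fun_prop) hq2 s hs
  have hsQ : s ∈ Rc l h t u := by
    have := hKR hs
    exact ⟨this.1.le, this.2.1.le, this.2.2.1.le, this.2.2.2.le⟩
  rw [mkC_sum _ _ _ hXc] at hd
  have e2 := (ContinuousMap.norm_coe_le_norm (mkC (Rc l h t u) F -
    mkC (Rc l h t u) fun s ↦ ∑ n ∈ Finset.Ico N0 N1, α n * X m n s) ⟨s, hsQ⟩).trans hd.le
  have hc : ContinuousOn (fun s ↦ ∑ n ∈ Finset.Ico N0 N1, α n * X m n s) (Rc l h t u) :=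
    continuousOn_finsetSum _ fun n _ ↦ continuousOn_const.mul (hXc n)
  rw [ContinuousMap.sub_apply, mkC_apply (hF.continuousOn.mono hsub), mkC_apply hc] at e2
  have e3 : F s - ∑ n ∈ Finset.Ico N0 N1, w n * X m n s = (F s - ∑ n ∈ Finset.Ico N0 N1, α n * X m n s) +
      ∑ n ∈ Finset.Ico N0 N1, (α n - w n) * X m n s := by
    simp only [sub_mul, Finset.sum_sub_distrib]; ring
  rw [e3]
  exact (norm_add_le _ _).trans (add_le_add e2 e1)

lemma main {a b y₁ y₂ : ℝ} (ha : 1 / 2 < a) (hb1 : b < 1) (m : ℕ) (hab : a < b) (hy : y₁ < y₂)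
    {f : ℂ → ℂ} (hf : DifferentiableOn ℂ f (Ro a b y₁ y₂)) {K : Set ℂ} (hK : IsCompact K)
    (hKR : K ⊆ Ro a b y₁ y₂) {ε : ℝ} (hε : 0 < ε) :
    ∃ c : ℕ → ℂ, (∀ n, ‖c n‖ = 1) ∧ ∃ g : ℂ → ℂ,
      TendstoUniformlyOn (fun N s ↦ ∑ n ∈ Finset.range N, Tm m n (c n) s) g atTop (Ro a b y₁ y₂) ∧
      ∀ s ∈ K, ‖g s - f s‖ < ε := by
  set R := Ro a b y₁ y₂ with hRdef
  have hRb : ∀ s ∈ R, a ≤ s.re ∧ ‖s‖ ≤ (|a| + |b|) + (|y₁| + |y₂|) := by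
    intro s hs
    obtain ⟨k1, k2, k3, k4⟩ := hs
    refine ⟨k1.le, (Complex.norm_le_abs_re_add_abs_im s).trans (add_le_add ?_ ?_)⟩
    · rw [abs_le]; constructor <;> linarith [neg_abs_le a, le_abs_self b, abs_nonneg a, abs_nonneg b]
    · rw [abs_le]; constructor <;> linarith [neg_abs_le y₁, le_abs_self y₂, abs_nonneg y₁, abs_nonneg y₂]
  obtain ⟨β, γ, hβ, hβ0, hγ, hG, hD, hX, hT⟩ := majorants m ha hRb
  obtain ⟨l, h, t, u, h1, h2, h3, h4, h5, h6, hKo⟩ := rect_around hab hy hK hKR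
  obtain ⟨κ, hκ0, hκ⟩ := qf_control h2 h5 hK hKo (show 0 < ε / 8 by positivity)
  obtain ⟨P, hP⟩ : ∃ P, P = 2 * (h - l) + 2 * (u - t) := ⟨_, rfl⟩
  have hτ : Tendsto (fun N ↦ ∑' k, β (k + N)) atTop (nhds 0) := tendsto_sum_nat_add β
  have hτP : Tendsto (fun N ↦ (∑' k, β (k + N)) * P) atTop (nhds 0) := by simpa using hτ.mul_const P
  obtain ⟨N0, hN2, hτ1, hτ2⟩ := ((eventually_ge_atTop 2).and
    ((hτ.eventually (gt_mem_nhds (show 0 < ε / 8 by positivity))).and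
      (hτP.eventually (gt_mem_nhds hκ0)))).exists
  have hF : DifferentiableOn ℂ (fun s ↦ f s - ∑ n ∈ Finset.range N0, Tm m n 1 s) R :=
    hf.sub (DifferentiableOn.fun_sum fun n _ ↦ Tm_diff m n fun s hs ↦ ha.trans hs.1)
  have hIco : ∀ N1, ∑ n ∈ Finset.Ico N0 N1, β n ≤ ∑' k, β (k + N0) := by
    intro N1
    rw [Finset.sum_Ico_eq_sum_range]
    simp only [add_comm N0]
    exact Summable.sum_le_tsum _ (fun k _ ↦ hβ0 _) ((summable_nat_add_iff N0).mpr hβ)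
  obtain ⟨N1, hN01, w, hw, hfa⟩ := finite_approx m ha hb1 h1 h2 h3 h4 h5 h6 hKo hP hκ (by positivity) hX
    hIco hτ2.le hF
  obtain ⟨hten, hDb⟩ := tail_series m hβ hβ0 hγ hG hD hN2 hN01
  obtain ⟨c, hc⟩ : ∃ c : ℕ → ℂ, c = fun n ↦ if n < N0 then 1 else if n < N1 then w n else eS n := ⟨_, rfl⟩
  have hc1 : ∀ n, ‖c n‖ = 1 := by
    intro n; rw [hc]; beta_reduce
    split_ifs
    · simp
    · exact hw n
    · exact eS_norm n
  have hca : ∀ n, n < N0 → c n = 1 := fun n hn ↦ by rw [hc]; beta_reduce; rw [if_pos hn]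
  have hcb : ∀ n, N0 ≤ n → n < N1 → c n = w n := fun n hn hn1 ↦ by
    rw [hc]; beta_reduce; rw [if_neg (by omega), if_pos hn1]
  have hcc : ∀ n, N1 ≤ n → c n = eS n := fun n hn ↦ by
    rw [hc]; beta_reduce; rw [if_neg (by omega), if_neg (by omega)]
  have hrem : ∀ n, ∀ s ∈ R, ‖Tm m n (c n) s - c n * X m n s‖ ≤ β n := fun n s hs ↦ hT n s hs _ (hc1 n)
  refine ⟨c, hc1, fun s ↦ (∑' n, (Tm m n (c n) s - c n * X m n s)) +
    ((∑ n ∈ Finset.range N1, c n * X m n s) + (-∑' k, DD m N1 k s)), ?_, ?_⟩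
  · have t1 : TendstoUniformlyOn (fun N s ↦ ∑ n ∈ Finset.range N, (Tm m n (c n) s - c n * X m n s))
        (fun s ↦ ∑' n, (Tm m n (c n) s - c n * X m n s)) atTop R := tendstoUniformlyOn_tsum_nat hβ hrem
    have t2 : TendstoUniformlyOn (fun (_ : ℕ) s ↦ ∑ n ∈ Finset.range N1, c n * X m n s)
        (fun s ↦ ∑ n ∈ Finset.range N1, c n * X m n s) atTop R := by
      rw [Metric.tendstoUniformlyOn_iff]
      intro e he
      exact Eventually.of_forall fun n s _ ↦ by simpa using he
    refine TendstoUniformlyOn.congr (t1.add (t2.add hten)) ?_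
    filter_upwards [eventually_ge_atTop N1] with n hn s hs
    simp only [Pi.add_apply]
    have e1 : ∑ k ∈ Finset.Ico N1 n, eS k * X m k s = ∑ k ∈ Finset.Ico N1 n, c k * X m k s :=
      Finset.sum_congr rfl fun k hk ↦ by rw [hcc k (Finset.mem_Ico.mp hk).1]
    rw [e1, Finset.sum_range_add_sum_Ico _ hn, ← Finset.sum_add_distrib]
    exact Finset.sum_congr rfl fun k _ ↦ by ring
  · intro s hs
    have hsR := hKR hs
    have hsm : Summable fun n ↦ (Tm m n (c n) s - c n * X m n s) :=
      Summable.of_norm_bounded hβ fun n ↦ hrem n s hsR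
    beta_reduce
    rw [← hsm.sum_add_tsum_nat_add N0, ← Finset.sum_range_add_sum_Ico _ hN01]
    have b1 : ‖∑' k, (Tm m (k + N0) (c (k + N0)) s - c (k + N0) * X m (k + N0) s)‖ ≤ ∑' k, β (k + N0) :=
      tsum_of_norm_bounded ((summable_nat_add_iff N0).mpr hβ).hasSum fun k ↦ hrem _ s hsR
    have b2 := hDb s hsR
    have b3 := hfa s hs
    have e1 : ∑ n ∈ Finset.Ico N0 N1, c n * X m n s = ∑ n ∈ Finset.Ico N0 N1, w n * X m n s :=
      Finset.sum_congr rfl fun k hk ↦ by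
        rw [hcb k (Finset.mem_Ico.mp hk).1 (Finset.mem_Ico.mp hk).2]
    have e2 : ∑ n ∈ Finset.range N0, (Tm m n (c n) s - c n * X m n s) =
        ∑ n ∈ Finset.range N0, Tm m n 1 s - ∑ n ∈ Finset.range N0, c n * X m n s := by
      rw [Finset.sum_sub_distrib]
      congr 1
      exact Finset.sum_congr rfl fun k hk ↦ by rw [hca k (Finset.mem_range.mp hk)]
    rw [e1, e2]
    generalize (∑' k, (Tm m (k + N0) (c (k + N0)) s - c (k + N0) * X m (k + N0) s)) = A1 at *
    generalize (-∑' k, DD m N1 k s) = A2 at *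
    generalize ∑ n ∈ Finset.Ico N0 N1, w n * X m n s = A3 at *
    generalize ∑ n ∈ Finset.range N0, Tm m n 1 s = A4 at *
    generalize ∑ n ∈ Finset.range N0, c n * X m n s = A5 at *
    have e4 : A4 - A5 + A1 + (A5 + A3 + A2) - f s = A1 + A2 - (f s - A4 - A3) := by ring
    rw [e4]
    have n1 := norm_sub_le (A1 + A2) (f s - A4 - A3)
    have n2 := norm_add_le A1 A2
    linarith

end PD

theorem polylog_series_dense
    (σL σR : ℝ) (h₁ : 1 / 2 < σL) (h₂ : σL < σR) (h₃ : σR < 1) (m : ℕ)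
    (a b y₁ y₂ : ℝ) (ha : σL ≤ a) (hb : b ≤ σR) (hab : a < b) (hy : y₁ < y₂)
    (R : Set ℂ) (hR : R = {s : ℂ | s.re ∈ Set.Ioo a b ∧ s.im ∈ Set.Ioo y₁ y₂})
    (f : ℂ → ℂ) (hf : DifferentiableOn ℂ f R)
    (K : Set ℂ) (hK : IsCompact K) (hKR : K ⊆ R)
    (ε : ℝ) (hε : 0 < ε) :
    ∃ c : Nat.Primes → ℂ, (∀ p, ‖c p‖ = 1) ∧
      ∃ g : ℂ → ℂ,
        TendstoLocallyUniformlyOn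
          (fun (N : ℕ) (s : ℂ) => ∑ p ∈ Finset.range N,
            if h : p.Prime then
              polylog m ((p : ℂ) ^ (-s) * c ⟨p, h⟩) / (((Real.log p) ^ m : ℝ) : ℂ)
            else 0)
          g atTop R ∧
        ∀ s ∈ K, ‖g s - f s‖ < ε := by
  have e : R = PD.Ro a b y₁ y₂ := by
    rw [hR]; ext s
    exact ⟨fun h ↦ ⟨h.1.1, h.1.2, h.2.1, h.2.2⟩, fun h ↦ ⟨⟨h.1, h.2.1⟩, h.2.2.1, h.2.2.2⟩⟩
  rw [e] at hf hKR ⊢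
  obtain ⟨c, hc, g, hg, hgK⟩ := PD.main (h₁.trans_le ha) (hb.trans_lt h₃) m hab hy hf hK hKR hε
  refine ⟨fun p ↦ c p.1, fun p ↦ hc _, g, ?_, hgK⟩
  have := hg.tendstoLocallyUniformlyOn
  simpa only [PD.Tm, dite_eq_ite] using this
end

section
/- Let X > 0, let φ : [0,∞) → ℝ be smooth with compact support and φ = 1 on [0,1], and fix 1/2 < σ₀ < 1 and m ≥ 0. For Y large, the 'difference of Dirichlet polynomials' second moment satisfies ∫_{T/2}^{(5/2)T} |∑_{2 ≤ n ≤ Y} Λ(n) n^{-σ-it}(log n)^{-(m+1)} − ∑_{n ≥ 2} Λ(n) φ(n/X) n^{-σ-it}(log n)^{-(m+1)}|² dt ≪ T ∑_{n > X} Λ(n)²(1 − φ(n/X))² / (n^{2σ₀}(log n)^{2m+2}) + Y^{2 − 2σ₀} log Y, uniformly for σ ≥ σ₀ (with implied constant depending on σ₀ and m). -/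
open Complex MeasureTheory Filter

lemma aux_normsq (S : Finset ℕ) (c ω : ℕ → ℝ) (t : ℝ) :
    ‖∑ n ∈ S, (c n : ℂ) * Complex.exp (((-(ω n * t) : ℝ) : ℂ) * I)‖ ^ 2 =
      ∑ n ∈ S, ∑ l ∈ S, c n * c l * Real.cos ((ω n - ω l) * t) := by
  have h : (∑ n ∈ S, (c n : ℂ) * Complex.exp (((-(ω n * t) : ℝ) : ℂ) * I)) =
      ((∑ n ∈ S, c n * Real.cos (ω n * t) : ℝ) : ℂ) +
        ((-∑ n ∈ S, c n * Real.sin (ω n * t) : ℝ) : ℂ) * I := by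
    push_cast
    rw [neg_mul, Finset.sum_mul, ← sub_eq_add_neg, ← Finset.sum_sub_distrib]
    refine Finset.sum_congr rfl fun n _ => ?_
    rw [Complex.exp_mul_I, Complex.cos_neg, Complex.sin_neg]
    ring
  rw [h, ← Complex.normSq_eq_norm_sq, Complex.normSq_add_mul_I, neg_sq, sq, sq,
    Finset.sum_mul_sum, Finset.sum_mul_sum, ← Finset.sum_add_distrib]
  refine Finset.sum_congr rfl fun n _ => ?_
  rw [← Finset.sum_add_distrib]
  refine Finset.sum_congr rfl fun l _ => ?_
  rw [sub_mul, Real.cos_sub]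
  ring

lemma aux_intcos (d a b : ℝ) (hd : d ≠ 0) : |∫ t in a..b, Real.cos (d * t)| ≤ 2 / |d| := by
  rw [intervalIntegral.integral_comp_mul_left (fun x => Real.cos x) hd, integral_cos, smul_eq_mul,
    abs_mul, abs_inv, div_eq_inv_mul]
  gcongr
  have h1 := Real.abs_sin_le_one (d * b)
  have h2 := Real.abs_sin_le_one (d * a)
  calc _ ≤ |Real.sin (d * b)| + |Real.sin (d * a)| := abs_sub _ _
    _ ≤ 2 := by linarith

lemma aux_mv (S : Finset ℕ) (c ω : ℕ → ℝ) (hω : ∀ n ∈ S, ∀ l ∈ S, n ≠ l → ω n ≠ ω l)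
    (a b : ℝ) (hab : a ≤ b) :
    ∫ t in Set.Ioc a b, ‖∑ n ∈ S, (c n : ℂ) * Complex.exp (((-(ω n * t) : ℝ) : ℂ) * I)‖ ^ 2 ≤
      (b - a) * ∑ n ∈ S, c n ^ 2 +
      ∑ n ∈ S, ∑ l ∈ S, if n = l then 0 else |c n| * |c l| * (2 / |ω n - ω l|) := by
  rw [← intervalIntegral.integral_of_le hab]
  simp_rw [aux_normsq]
  rw [intervalIntegral.integral_finsetSum
    (fun n _ => Continuous.intervalIntegrable (by fun_prop) _ _), Finset.mul_sum,
    ← Finset.sum_add_distrib]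
  refine Finset.sum_le_sum fun n hn => ?_
  rw [intervalIntegral.integral_finsetSum
    (fun n _ => Continuous.intervalIntegrable (by fun_prop) _ _)]
  have : (b - a) * c n ^ 2 = ∑ l ∈ S, if n = l then (b - a) * c n ^ 2 else 0 := by
    rw [Finset.sum_ite_eq]; simp [hn]
  rw [this, ← Finset.sum_add_distrib]
  refine Finset.sum_le_sum fun l hl => ?_
  split_ifs with h
  · subst h
    simp
    apply le_of_eq; ring
  · rw [intervalIntegral.integral_const_mul, zero_add]
    refine (le_abs_self _).trans ?_
    rw [abs_mul, abs_mul]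
    gcongr
    exact aux_intcos _ _ _ (sub_ne_zero.2 (hω n hn l hl h))

lemma aux_pow (s : ℝ) (hs : 0 ≤ s) (hs1 : s < 1) (N : ℕ) :
    ∑ n ∈ Finset.Icc 1 N, (n : ℝ) ^ (-s) ≤ (N : ℝ) ^ (1 - s) / (1 - s) := by
  have hp : 0 < 1 - s := by linarith
  induction N with
  | zero => simp; positivity
  | succ N ih =>
    rw [Finset.sum_Icc_succ_top (by omega)]
    have hN : (0 : ℝ) < (N : ℝ) + 1 := by positivity
    have hb := rpow_one_add_le_one_add_mul_self (s := -1 / ((N : ℝ) + 1)) (p := 1 - s)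
      (by rw [le_div_iff₀ hN]; linarith [(Nat.cast_nonneg N : (0:ℝ) ≤ N)]) hp.le (by linarith)
    have e : 1 + -1 / ((N : ℝ) + 1) = N / (N + 1) := by field_simp; ring
    rw [e, Real.div_rpow (by positivity) hN.le, div_le_iff₀ (by positivity)] at hb
    have e2 : ((N : ℝ) + 1) ^ (1 - s) = ((N : ℝ) + 1) ^ (-s) * (N + 1) := by
      rw [← Real.rpow_add_one hN.ne']; congr 1; ring
    rw [le_div_iff₀ hp] at ih ⊢
    push_cast
    rw [add_mul]
    have e3 : (1 + (1 - s) * (-1 / ((N : ℝ) + 1))) * ((N : ℝ) + 1) ^ (1 - s) =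
      ((N : ℝ) + 1) ^ (1 - s) - (1 - s) * ((N : ℝ) + 1) ^ (-s) := by
      rw [e2]; field_simp; ring
    linarith

lemma aux_harm (N : ℕ) : ∑ k ∈ Finset.Icc 1 N, (1 : ℝ) / k ≤ 1 + Real.log N := by
  have h := harmonic_le_one_add_log N
  rw [harmonic_eq_sum_Icc] at h
  push_cast at h
  simpa using h

lemma aux_recip (N l : ℕ) (hl : l ∈ Finset.Icc 1 N) :
    ∑ n ∈ Finset.Icc 1 N, (if n = l then 0 else 1 / |(n : ℝ) - l|) ≤ 2 * (1 + Real.log N) := by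
  rw [Finset.mem_Icc] at hl
  have h1 : ∑ n ∈ (Finset.Icc 1 N).filter (fun n => n < l), 1 / |(n : ℝ) - l| ≤
      1 + Real.log N := by
    refine le_trans ?_ (aux_harm N)
    have : ∑ n ∈ (Finset.Icc 1 N).filter (fun n => n < l), 1 / |(n : ℝ) - l| =
      ∑ k ∈ ((Finset.Icc 1 N).filter (fun n => n < l)).image (fun n => l - n), (1 : ℝ) / k := by
      rw [Finset.sum_image]
      · refine Finset.sum_congr rfl fun n hn => ?_
        simp only [Finset.mem_filter] at hn
        rw [Nat.cast_sub hn.2.le, abs_sub_comm, abs_of_nonneg]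
        have : (n : ℝ) < l := by exact_mod_cast hn.2
        linarith
      · intro x hx y hy h
        simp at hx hy h
        omega
    rw [this]
    refine Finset.sum_le_sum_of_subset_of_nonneg ?_ (fun _ _ _ => by positivity)
    intro k hk
    simp only [Finset.mem_image, Finset.mem_filter, Finset.mem_Icc] at hk ⊢
    obtain ⟨n, hn, rfl⟩ := hk
    omega
  have h2 : ∑ n ∈ (Finset.Icc 1 N).filter (fun n => l < n), 1 / |(n : ℝ) - l| ≤
      1 + Real.log N := by
    refine le_trans ?_ (aux_harm N)
    have : ∑ n ∈ (Finset.Icc 1 N).filter (fun n => l < n), 1 / |(n : ℝ) - l| =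
      ∑ k ∈ ((Finset.Icc 1 N).filter (fun n => l < n)).image (fun n => n - l), (1 : ℝ) / k := by
      rw [Finset.sum_image]
      · refine Finset.sum_congr rfl fun n hn => ?_
        simp only [Finset.mem_filter] at hn
        rw [Nat.cast_sub hn.2.le, abs_of_nonneg]
        have : (l : ℝ) < n := by exact_mod_cast hn.2
        linarith
      · intro x hx y hy h
        simp at hx hy h
        omega
    rw [this]
    refine Finset.sum_le_sum_of_subset_of_nonneg ?_ (fun _ _ _ => by positivity)
    intro k hk
    simp only [Finset.mem_image, Finset.mem_filter, Finset.mem_Icc] at hk ⊢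
    obtain ⟨n, hn, rfl⟩ := hk
    omega
  have : ∑ n ∈ Finset.Icc 1 N, (if n = l then 0 else 1 / |(n : ℝ) - l|) =
      ∑ n ∈ (Finset.Icc 1 N).filter (fun n => n < l), 1 / |(n : ℝ) - l| +
      ∑ n ∈ (Finset.Icc 1 N).filter (fun n => l < n), 1 / |(n : ℝ) - l| := by
    rw [Finset.sum_filter, Finset.sum_filter, ← Finset.sum_add_distrib]
    refine Finset.sum_congr rfl fun n _ => ?_
    rcases lt_trichotomy n l with h | h | h
    · simp [h, h.ne, not_lt.2 h.le]
    · simp [h]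
    · simp [h, h.ne', not_lt.2 h.le]
  rw [this]; linarith

lemma aux_pair_lt (s : ℝ) (hs : 0 ≤ s) (l n : ℕ) (hl : 1 ≤ l) (hln : l < n) :
    (n : ℝ) ^ (-s) * (l : ℝ) ^ (-s) * (1 / |Real.log n - Real.log l|) ≤
      (n : ℝ) ^ (-s) * (l : ℝ) ^ (-s) + (l : ℝ) ^ (-(2 * s - 1)) * (1 / |(n : ℝ) - l|) := by
  have hl0 : (0 : ℝ) < l := by exact_mod_cast hl
  have hln' : (l : ℝ) < n := by exact_mod_cast hln
  have hn0 : (0 : ℝ) < n := hl0.trans hln'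
  have hd : 0 < (n : ℝ) - l := by linarith
  have hlog : ((n : ℝ) - l) / n ≤ Real.log n - Real.log l := by
    have := Real.log_le_sub_one_of_pos (div_pos hl0 hn0)
    rw [Real.log_div hl0.ne' hn0.ne'] at this
    have e : ((n : ℝ) - l) / n = 1 - l / n := by field_simp
    linarith
  have hpos : 0 < ((n : ℝ) - l) / n := div_pos hd hn0
  rw [abs_of_pos (hpos.trans_le hlog), abs_of_pos hd]
  have h1 : 1 / (Real.log n - Real.log l) ≤ 1 + l / ((n : ℝ) - l) := by
    refine (one_div_le_one_div_of_le hpos hlog).trans (le_of_eq ?_)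
    field_simp; ring
  have h2 : (n : ℝ) ^ (-s) ≤ (l : ℝ) ^ (-s) :=
    Real.rpow_le_rpow_of_nonpos hl0 hln'.le (by linarith)
  have h3 : (l : ℝ) ^ (-(2 * s - 1)) = (l : ℝ) ^ (-s) * (l : ℝ) ^ (-s) * l := by
    rw [← Real.rpow_add hl0, ← Real.rpow_add_one hl0.ne']; congr 1; ring
  calc _ ≤ (n : ℝ) ^ (-s) * (l : ℝ) ^ (-s) * (1 + l / ((n : ℝ) - l)) := by gcongr
    _ = (n : ℝ) ^ (-s) * (l : ℝ) ^ (-s) + (n : ℝ) ^ (-s) * (l : ℝ) ^ (-s) * l * (1 / ((n : ℝ) - l)) := by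
      field_simp
    _ ≤ _ := by rw [h3]; gcongr

lemma aux_pair (s : ℝ) (hs : 0 ≤ s) (l n : ℕ) (hl : 1 ≤ l) (hn : 1 ≤ n) (hln : n ≠ l) :
    (n : ℝ) ^ (-s) * (l : ℝ) ^ (-s) * (1 / |Real.log n - Real.log l|) ≤
      (n : ℝ) ^ (-s) * (l : ℝ) ^ (-s) + (l : ℝ) ^ (-(2 * s - 1)) * (1 / |(n : ℝ) - l|)
      + (n : ℝ) ^ (-(2 * s - 1)) * (1 / |(l : ℝ) - n|) := by
  rcases lt_or_gt_of_ne hln with h | h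
  · have := aux_pair_lt s hs n l hn h
    rw [abs_sub_comm, mul_comm ((n : ℝ) ^ (-s))]
    have h0 : 0 ≤ (l : ℝ) ^ (-(2 * s - 1)) * (1 / |(n : ℝ) - l|) := by positivity
    linarith
  · have := aux_pair_lt s hs l n hl h
    have h0 : 0 ≤ (n : ℝ) ^ (-(2 * s - 1)) * (1 / |(l : ℝ) - n|) := by positivity
    linarith

lemma aux_off (s : ℝ) (hs : 1 / 2 < s) (hs1 : s < 1) (N : ℕ) (K : ℝ) (c : ℕ → ℝ)
    (hc : ∀ n ∈ Finset.Icc 1 N, |c n| ≤ K * (n : ℝ) ^ (-s)) :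
    (∑ n ∈ Finset.Icc 1 N, ∑ l ∈ Finset.Icc 1 N,
      if n = l then 0 else |c n| * |c l| * (2 / |Real.log n - Real.log l|)) ≤
    2 * K ^ 2 * (((N : ℝ) ^ (1 - s) / (1 - s)) ^ 2 +
      2 * ((N : ℝ) ^ (2 - 2 * s) / (2 - 2 * s) * (2 * (1 + Real.log N)))) := by
  set S := Finset.Icc 1 N with hS
  have step : ∀ n ∈ S, ∀ l ∈ S,
      (if n = l then 0 else |c n| * |c l| * (2 / |Real.log n - Real.log l|)) ≤
      2 * K ^ 2 * ((n : ℝ) ^ (-s) * (l : ℝ) ^ (-s)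
        + (l : ℝ) ^ (-(2 * s - 1)) * (if n = l then 0 else 1 / |(n : ℝ) - l|)
        + (n : ℝ) ^ (-(2 * s - 1)) * (if l = n then 0 else 1 / |(l : ℝ) - n|)) := by
    intro n hn l hl
    split_ifs with h h' h'
    · positivity
    · exact absurd h.symm h'
    · exact absurd h'.symm h
    · have hp := aux_pair s (by linarith) l n (Finset.mem_Icc.1 hl).1 (Finset.mem_Icc.1 hn).1 h
      calc _ ≤ (K * (n : ℝ) ^ (-s)) * (K * (l : ℝ) ^ (-s)) * (2 / |Real.log n - Real.log l|) := by
            have := hc n hn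
            have := hc l hl
            have : 0 ≤ K * (n : ℝ) ^ (-s) := (abs_nonneg _).trans (hc n hn)
            gcongr
        _ = 2 * K ^ 2 * ((n : ℝ) ^ (-s) * (l : ℝ) ^ (-s) * (1 / |Real.log n - Real.log l|)) := by
            ring
        _ ≤ _ := by gcongr
  have key : ∑ l ∈ S, ∑ n ∈ S, (l : ℝ) ^ (-(2 * s - 1)) * (if n = l then 0 else 1 / |(n : ℝ) - l|)
      ≤ (N : ℝ) ^ (2 - 2 * s) / (2 - 2 * s) * (2 * (1 + Real.log N)) := by
    have hpw := aux_pow (2 * s - 1) (by linarith) (by linarith) N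
    rw [show 1 - (2 * s - 1) = 2 - 2 * s by ring] at hpw
    have hlN : 0 ≤ Real.log N := Real.log_natCast_nonneg N
    calc _ ≤ ∑ l ∈ S, (l : ℝ) ^ (-(2 * s - 1)) * (2 * (1 + Real.log N)) := by
          refine Finset.sum_le_sum fun l hl => ?_
          rw [← Finset.mul_sum]
          gcongr
          exact aux_recip N l hl
      _ ≤ _ := by
          rw [← Finset.sum_mul]
          gcongr
  have hpw := aux_pow s (by linarith) hs1 N
  calc _ ≤ ∑ n ∈ S, ∑ l ∈ S, 2 * K ^ 2 * ((n : ℝ) ^ (-s) * (l : ℝ) ^ (-s)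
        + (l : ℝ) ^ (-(2 * s - 1)) * (if n = l then 0 else 1 / |(n : ℝ) - l|)
        + (n : ℝ) ^ (-(2 * s - 1)) * (if l = n then 0 else 1 / |(l : ℝ) - n|)) :=
        Finset.sum_le_sum fun n hn => Finset.sum_le_sum fun l hl => step n hn l hl
    _ = 2 * K ^ 2 * ((∑ n ∈ S, (n : ℝ) ^ (-s)) ^ 2 +
        2 * ∑ l ∈ S, ∑ n ∈ S,
          (l : ℝ) ^ (-(2 * s - 1)) * (if n = l then 0 else 1 / |(n : ℝ) - l|)) := by
        simp_rw [← Finset.mul_sum, Finset.sum_add_distrib]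
        rw [Finset.sum_comm (s := S) (t := S) (f := fun n l : ℕ => (l : ℝ) ^ (-(2 * s - 1)) * (if n = l then 0 else 1 / |(n : ℝ) - l|)), sq (∑ n ∈ S, (n : ℝ) ^ (-s)), Finset.sum_mul_sum]
        simp_rw [← Finset.mul_sum]
        ring
    _ ≤ _ := by
        gcongr

lemma aux_vm (m n : ℕ) (hn : 1 ≤ n) :
    |ArithmeticFunction.vonMangoldt n / (Real.log n) ^ (m + 1)| ≤ 1 / (Real.log 2) ^ m := by
  have hl2 : 0 < Real.log 2 := Real.log_pos (by norm_num)
  rcases hn.eq_or_lt with h | h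
  · subst h; simp; positivity
  · have h2 : Real.log 2 ≤ Real.log n := Real.log_le_log (by norm_num) (by exact_mod_cast h)
    have hpos : 0 < Real.log n := hl2.trans_le h2
    have hv := ArithmeticFunction.vonMangoldt_le_log (n := n)
    have hv0 : 0 ≤ ArithmeticFunction.vonMangoldt n := ArithmeticFunction.vonMangoldt_nonneg
    rw [abs_of_nonneg (by positivity)]
    calc _ ≤ Real.log n / (Real.log n) ^ (m + 1) := by gcongr
      _ = 1 / (Real.log n) ^ m := by rw [pow_succ]; field_simp
      _ ≤ _ := by gcongr

theorem dirichlet_polynomial_second_moment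
    (σ₀ : ℝ) (hσ₀ : 1 / 2 < σ₀) (hσ₀' : σ₀ < 1) (m : ℕ)
    (φ : ℝ → ℝ) (hφ : ContDiff ℝ (⊤ : ℕ∞) φ) (hφc : HasCompactSupport φ)
    (hφ1 : ∀ x ∈ Set.Icc (0 : ℝ) 1, φ x = 1) :
    ∃ C > 0, ∀ X : ℝ, 0 < X → ∃ Y₀ : ℝ, ∀ Y : ℝ, Y₀ ≤ Y → ∀ T : ℝ, 0 < T →
      ∀ σ : ℝ, σ₀ ≤ σ →
      (∫ t in Set.Ioc (T / 2) (5 * T / 2),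
        ‖(∑ n ∈ Finset.range (⌊Y⌋₊ + 1),
            (ArithmeticFunction.vonMangoldt n : ℂ) /
              ((n : ℂ) ^ ((σ : ℂ) + t * I) * (((Real.log n) ^ (m + 1) : ℝ) : ℂ)))
          - ∑' n : ℕ,
              (ArithmeticFunction.vonMangoldt n : ℂ) * ((φ ((n : ℝ) / X) : ℝ) : ℂ) /
                ((n : ℂ) ^ ((σ : ℂ) + t * I) * (((Real.log n) ^ (m + 1) : ℝ) : ℂ))‖ ^ 2)
      ≤ C * (T * (∑' n : ℕ, if X < (n : ℝ) then
              (ArithmeticFunction.vonMangoldt n) ^ 2 * (1 - φ ((n : ℝ) / X)) ^ 2 /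
                ((n : ℝ) ^ (2 * σ₀) * (Real.log n) ^ (2 * m + 2))
            else 0)
          + Y ^ (2 - 2 * σ₀) * Real.log Y) := by
  obtain ⟨A, hA⟩ := hφc.exists_bound_of_continuous hφ.continuous
  have hA0 : 0 ≤ A := (norm_nonneg _).trans (hA 0)
  have hB : ∀ x, |1 - φ x| ≤ 1 + A := fun x => by
    have h1 := hA x
    rw [Real.norm_eq_abs] at h1
    have h2 := abs_sub (1 : ℝ) (φ x)
    rw [abs_one] at h2
    linarith
  have hl2 : 0 < Real.log 2 := Real.log_pos (by norm_num)
  set K : ℝ := (1 + A) * (1 / (Real.log 2) ^ m) with hK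
  have hK0 : 0 < K := by positivity
  obtain ⟨R, hR0, hR⟩ : ∃ R : ℝ, 0 < R ∧ ∀ x, R < x → φ x = 0 := by
    obtain ⟨R, hR⟩ := hφc.isCompact.isBounded.subset_closedBall 0
    refine ⟨max R 1, by positivity, fun x hx => ?_⟩
    by_contra h
    have h1 := hR (subset_tsupport φ (Function.mem_support.2 h))
    rw [mem_closedBall_zero_iff, Real.norm_eq_abs] at h1
    have := le_abs_self x
    have := le_max_left R 1
    linarith
  have hs1 : 0 < 1 - σ₀ := by linarith
  have hs2 : 0 < 2 - 2 * σ₀ := by linarith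
  set D : ℝ := 2 * K ^ 2 * ((1 / (1 - σ₀)) ^ 2 + 8 / (2 - 2 * σ₀)) with hD
  have hD0 : 0 < D := by positivity
  refine ⟨2 + D, by positivity, fun X hX => ⟨max (R * X) 3, fun Y hY T hT σ hσ => ?_⟩⟩
  have hYR : R * X ≤ Y := (le_max_left _ _).trans hY
  have hY3 : 3 ≤ Y := (le_max_right _ _).trans hY
  have hY0 : 0 < Y := by linarith
  have hlogY : 1 ≤ Real.log Y := by
    rw [Real.le_log_iff_exp_le hY0]
    linarith [Real.exp_one_lt_d9]
  set N := ⌊Y⌋₊ with hN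
  have hN1 : 1 ≤ N := Nat.le_floor (by norm_num; linarith)
  have hNY : (N : ℝ) ≤ Y := Nat.floor_le hY0.le
  have hN0 : (0 : ℝ) < N := by exact_mod_cast hN1
  -- coefficients
  let c : ℝ → ℕ → ℝ := fun s n =>
    ArithmeticFunction.vonMangoldt n / (Real.log n) ^ (m + 1) * (1 - φ ((n : ℝ) / X)) * (n : ℝ) ^ (-s)
  have hc : ∀ n : ℕ, 1 ≤ n → |c σ₀ n| ≤ K * (n : ℝ) ^ (-σ₀) := by
    intro n hn
    simp only [c]
    rw [abs_mul, abs_mul, abs_of_nonneg (Real.rpow_nonneg (Nat.cast_nonneg n) _), hK,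
      mul_comm (1 + A)]
    have h1 := aux_vm m n hn
    have h2 := hB ((n : ℝ) / X)
    gcongr
  have hcσ : ∀ n : ℕ, 1 ≤ n → |c σ n| ≤ |c σ₀ n| := by
    intro n hn
    have h1n : (1 : ℝ) ≤ n := by exact_mod_cast hn
    simp only [c]
    rw [abs_mul, abs_mul _ ((n : ℝ) ^ (-σ₀)), abs_of_nonneg (Real.rpow_nonneg (Nat.cast_nonneg n) (-σ)),
      abs_of_nonneg (Real.rpow_nonneg (Nat.cast_nonneg n) (-σ₀))]
    gcongr
  -- diagonal series
  have hterm : ∀ n : ℕ, (if X < (n : ℝ) then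
              (ArithmeticFunction.vonMangoldt n) ^ 2 * (1 - φ ((n : ℝ) / X)) ^ 2 /
                ((n : ℝ) ^ (2 * σ₀) * (Real.log n) ^ (2 * m + 2))
            else 0) = c σ₀ n ^ 2 := by
    intro n
    split_ifs with h
    · have hn : (0 : ℝ) < n := hX.trans h
      simp only [c]
      rw [Real.rpow_neg hn.le, mul_comm 2 σ₀, Real.rpow_mul hn.le, Real.rpow_two,
        show 2 * m + 2 = (m + 1) * 2 by ring, pow_mul]
      rw [mul_pow, mul_pow, div_pow, inv_pow, div_eq_mul_inv, mul_inv, div_eq_mul_inv]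
      ring
    · have h1 : φ ((n : ℝ) / X) = 1 :=
        hφ1 _ ⟨by positivity, (div_le_one hX).2 (not_lt.1 h)⟩
      simp [c, h1]
  have hsum : Summable fun n : ℕ => c σ₀ n ^ 2 := by
    have hs : Summable fun n : ℕ => K ^ 2 * (n : ℝ) ^ (-(2 * σ₀)) :=
      (Real.summable_nat_rpow.2 (by linarith)).mul_left _
    refine Summable.of_nonneg_of_le (fun n => sq_nonneg _) (fun n => ?_) hs
    rcases Nat.eq_zero_or_pos n with h | h
    · subst h
      have : c σ₀ 0 = 0 := by simp [c]
      rw [this, zero_pow two_ne_zero]; positivity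
    · have hn : (0 : ℝ) < n := by exact_mod_cast h
      have h1 := pow_le_pow_left₀ (abs_nonneg _) (hc n h) 2
      rw [sq_abs] at h1
      refine h1.trans (le_of_eq ?_)
      rw [mul_pow K, ← Real.rpow_natCast ((n : ℝ) ^ (-σ₀)), ← Real.rpow_mul hn.le]
      congr 2
      push_cast; ring
  simp_rw [hterm]
  -- rewrite the integrand
  have hint : ∀ t : ℝ, (∑ n ∈ Finset.range (N + 1),
            (ArithmeticFunction.vonMangoldt n : ℂ) /
              ((n : ℂ) ^ ((σ : ℂ) + t * I) * (((Real.log n) ^ (m + 1) : ℝ) : ℂ)))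
          - ∑' n : ℕ,
              (ArithmeticFunction.vonMangoldt n : ℂ) * ((φ ((n : ℝ) / X) : ℝ) : ℂ) /
                ((n : ℂ) ^ ((σ : ℂ) + t * I) * (((Real.log n) ^ (m + 1) : ℝ) : ℂ)) =
      ∑ n ∈ Finset.Icc 1 N, (c σ n : ℂ) * Complex.exp (((-(Real.log n * t) : ℝ) : ℂ) * I) := by
    intro t
    rw [tsum_eq_sum (s := Finset.range (N + 1)), ← Finset.sum_sub_distrib]
    · symm
      apply Finset.sum_subset_zero_on_sdiff
      · intro n hn
        simp only [Finset.mem_Icc, Finset.mem_range] at hn ⊢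
        omega
      · intro n hn
        simp only [Finset.mem_sdiff, Finset.mem_Icc, Finset.mem_range] at hn
        have : n = 0 := by omega
        subst this
        simp
      · intro n hn
        have hn1 : 1 ≤ n := (Finset.mem_Icc.1 hn).1
        have hn0 : (0 : ℝ) < n := by exact_mod_cast hn1
        have hnC : (n : ℂ) ≠ 0 := by exact_mod_cast hn0.ne'
        have e : ((n : ℂ) ^ ((σ : ℂ) + t * I))⁻¹ =
            (((n : ℝ) ^ (-σ) : ℝ) : ℂ) * Complex.exp (((-(Real.log n * t) : ℝ) : ℂ) * I) := by
          rw [← Complex.cpow_neg, neg_add, Complex.cpow_add _ _ hnC, Complex.ofReal_cpow hn0.le]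
          congr 1
          · push_cast; rfl
          · rw [Complex.cpow_def_of_ne_zero hnC, ← Complex.natCast_log]
            congr 1
            push_cast; ring
        rw [div_eq_mul_inv, div_eq_mul_inv, mul_inv, e]
        simp only [c]
        push_cast
        rw [div_eq_mul_inv]
        ring
    · intro n hn
      rw [Finset.mem_range, not_lt] at hn
      have h1 : Y < n := by
        rw [← Nat.floor_lt hY0.le]; omega
      have : φ ((n : ℝ) / X) = 0 := hR _ (by rw [lt_div_iff₀ hX]; linarith)
      simp [this]
  simp_rw [hint]
  have hmv := aux_mv (Finset.Icc 1 N) (c σ) (fun n => Real.log n) (by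
    intro n hn l hl hne h
    have hn0 : (0 : ℝ) < n := by exact_mod_cast (Finset.mem_Icc.1 hn).1
    have hl0 : (0 : ℝ) < l := by exact_mod_cast (Finset.mem_Icc.1 hl).1
    exact hne (by exact_mod_cast Real.log_injOn_pos hn0 hl0 h)) (T / 2) (5 * T / 2) (by linarith)
  have hoff := aux_off σ₀ hσ₀ hσ₀' N K (c σ) (fun n hn =>
    (hcσ n (Finset.mem_Icc.1 hn).1).trans (hc n (Finset.mem_Icc.1 hn).1))
  have hdiag : ∑ n ∈ Finset.Icc 1 N, c σ n ^ 2 ≤ ∑' n : ℕ, c σ₀ n ^ 2 :=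
    (Finset.sum_le_sum fun n hn => sq_le_sq.2 (hcσ n (Finset.mem_Icc.1 hn).1)).trans
      (hsum.sum_le_tsum _ (fun _ _ => sq_nonneg _))
  have hV0 : 0 ≤ ∑' n : ℕ, c σ₀ n ^ 2 := tsum_nonneg fun _ => sq_nonneg _
  have hoff2 : 2 * K ^ 2 * (((N : ℝ) ^ (1 - σ₀) / (1 - σ₀)) ^ 2 +
      2 * ((N : ℝ) ^ (2 - 2 * σ₀) / (2 - 2 * σ₀) * (2 * (1 + Real.log N)))) ≤
      D * (Y ^ (2 - 2 * σ₀) * Real.log Y) := by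
    have hlN : Real.log N ≤ Real.log Y := Real.log_le_log hN0 hNY
    have hlN0 : 0 ≤ Real.log N := Real.log_natCast_nonneg N
    have hP : (N : ℝ) ^ (2 - 2 * σ₀) ≤ Y ^ (2 - 2 * σ₀) := by gcongr
    have hP0 : 0 ≤ (N : ℝ) ^ (2 - 2 * σ₀) := by positivity
    have e : ((N : ℝ) ^ (1 - σ₀)) ^ 2 = (N : ℝ) ^ (2 - 2 * σ₀) := by
      rw [← Real.rpow_natCast, ← Real.rpow_mul hN0.le]; congr 1; push_cast; ring
    rw [div_pow, e, hD, mul_assoc (2 * K ^ 2)]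
    gcongr 2 * K ^ 2 * ?_
    have h1 : (N : ℝ) ^ (2 - 2 * σ₀) / (1 - σ₀) ^ 2 ≤
        (1 / (1 - σ₀)) ^ 2 * (Y ^ (2 - 2 * σ₀) * Real.log Y) := by
      rw [div_pow, one_pow, div_eq_mul_one_div, mul_comm]
      gcongr
      nlinarith
    have h2 : 2 * ((N : ℝ) ^ (2 - 2 * σ₀) / (2 - 2 * σ₀) * (2 * (1 + Real.log N))) ≤
        8 / (2 - 2 * σ₀) * (Y ^ (2 - 2 * σ₀) * Real.log Y) := by
      calc _ ≤ 2 * (Y ^ (2 - 2 * σ₀) / (2 - 2 * σ₀) * (2 * (2 * Real.log Y))) := by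
            gcongr; linarith
        _ = _ := by ring
    linarith
  have hW0 : 0 ≤ Y ^ (2 - 2 * σ₀) * Real.log Y := by positivity
  refine hmv.trans ((add_le_add le_rfl (hoff.trans hoff2)).trans ?_)
  have h3 : (5 * T / 2 - T / 2) * ∑ n ∈ Finset.Icc 1 N, c σ n ^ 2 ≤
      2 * (T * ∑' n : ℕ, c σ₀ n ^ 2) := by
    rw [show 5 * T / 2 - T / 2 = 2 * T by ring, mul_assoc]
    gcongr
  have h4 : 0 ≤ D * (T * ∑' n : ℕ, c σ₀ n ^ 2) := by positivity
  linarith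
end
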